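/- arXiv:2204.07785 — 3 statements merged into one kernel-verified Lean document; each statement's English description precedes it below -/
import Mathlib

section
/- For every integer k ≥ 2, ∑_{n=1}^{k−1} 2^{n−1} G_0(k,n) = ∑_{n=1}^{k−1} (−1)^{k−n−1} 2^{n−1} G_0^*(k,n) = ∑ 2^{n+2m} (2^{n_1−1}−1)⋯(2^{n_m−1}−1) / (n! m! n_1⋯n_m (2^{n_1}−1)⋯(2^{n_m}−1)) · t(2) t(n_1)⋯t(n_m) (log 2)^n, where the last sum ranges over all n, m ≥ 0 and integers n_1, …, n_m ≥ 2 with n + n_1 + ⋯ + n_m = k − 2. -/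
open scoped BigOperators

/-- The multiple `t`-value of an index `K = (k₁, …, kₙ)` (a list of positive integers):
`t(K) = ∑_{m₁ > ⋯ > mₙ > 0, all mᵢ odd} 1 / (m₁^{k₁} ⋯ mₙ^{kₙ})`. -/
noncomputable def multT (K : List ℕ) : ℝ :=
  ∑' m : Fin K.length → ℕ,
    if (∀ i, Odd (m i)) ∧ (∀ i j : Fin K.length, i < j → m j < m i) then
      ∏ i, ((m i : ℝ) ^ K.get i)⁻¹
    else 0

/-- The multiple `t`-star value of an index `K = (k₁, …, kₙ)`:
`t*(K) = ∑_{m₁ ≥ ⋯ ≥ mₙ > 0, all mᵢ odd} 1 / (m₁^{k₁} ⋯ mₙ^{kₙ})`. -/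
noncomputable def multTStar (K : List ℕ) : ℝ :=
  ∑' m : Fin K.length → ℕ,
    if (∀ i, Odd (m i)) ∧ (∀ i j : Fin K.length, i < j → m j ≤ m i) then
      ∏ i, ((m i : ℝ) ^ K.get i)⁻¹
    else 0

/-- An index (list of positive integers) is admissible if its first entry is `> 1`. -/
def Admissible (K : List ℕ) : Prop := (∀ i ∈ K, 1 ≤ i) ∧ 2 ≤ K.headI

instance : DecidablePred Admissible := fun K =>
  inferInstanceAs (Decidable ((∀ i ∈ K, 1 ≤ i) ∧ 2 ≤ K.headI))

/-- `G0h k n s` is the sum of multiple `t`-values over all admissible indices of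
weight `k`, depth `n` and height `s`. -/
noncomputable def G0h (k n s : ℕ) : ℝ :=
  ∑' K : List ℕ,
    if Admissible K ∧ K.sum = k ∧ K.length = n ∧
        K.countP (fun i => decide (2 ≤ i)) = s then
      multT K
    else 0

/-- `G0hStar k n s` is the sum of multiple `t`-star values over all admissible indices of
weight `k`, depth `n` and height `s`. -/
noncomputable def G0hStar (k n s : ℕ) : ℝ :=
  ∑' K : List ℕ,
    if Admissible K ∧ K.sum = k ∧ K.length = n ∧
        K.countP (fun i => decide (2 ≤ i)) = s then
      multTStar K
    else 0

/-- `G0d k n` is the sum of multiple `t`-values over all admissible indices of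
weight `k` and depth `n`. -/
noncomputable def G0d (k n : ℕ) : ℝ :=
  ∑' K : List ℕ,
    if Admissible K ∧ K.sum = k ∧ K.length = n then multT K else 0

/-- `G0dStar k n` is the sum of multiple `t`-star values over all admissible indices of
weight `k` and depth `n`. -/
noncomputable def G0dStar (k n : ℕ) : ℝ :=
  ∑' K : List ℕ,
    if Admissible K ∧ K.sum = k ∧ K.length = n then multTStar K else 0

/-- The single `t`-value `t(n) = ∑_{m odd, m > 0} 1 / m^n`. -/
noncomputable def tval (n : ℕ) : ℝ := ∑' m : ℕ, 1 / (2 * (m : ℝ) + 1) ^ n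

/-- The ascending Pochhammer symbol `(a)ₙ = a (a+1) ⋯ (a+n-1)`. -/
noncomputable def poch (a : ℂ) (n : ℕ) : ℂ := ∏ i ∈ Finset.range n, (a + i)

/-- The generalized hypergeometric function `₃F₂(a, b, c; d, e; z)`. -/
noncomputable def hyp3F2 (a b c d e z : ℂ) : ℂ :=
  ∑' n : ℕ, poch a n * poch b n * poch c n /
      ((n.factorial : ℂ) * poch d n * poch e n) * z ^ n

/-- The generalized hypergeometric function with upper parameters `as` and lower
parameters `bs`. -/
noncomputable def hypF (as bs : List ℂ) (z : ℂ) : ℂ :=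
  ∑' n : ℕ, (as.map fun a => poch a n).prod /
      ((n.factorial : ℂ) * (bs.map fun b => poch b n).prod) * z ^ n

/-- The one-variable multiple polylogarithm
`L_K(z) = ∑_{m₁ > ⋯ > mₙ > 0, all mᵢ odd} z^{m₁} / (m₁^{k₁} ⋯ mₙ^{kₙ})`. -/
noncomputable def Lt (K : List ℕ) (z : ℝ) : ℝ :=
  ∑' m : Fin K.length → ℕ,
    if h : (∀ i, Odd (m i)) ∧ (∀ i j : Fin K.length, i < j → m j < m i) ∧
        0 < K.length then
      z ^ (m ⟨0, h.2.2⟩) * ∏ i, ((m i : ℝ) ^ K.get i)⁻¹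
    else 0

/-- The one-variable star multiple polylogarithm
`L*_K(z) = ∑_{m₁ ≥ ⋯ ≥ mₙ > 0, all mᵢ odd} z^{m₁} / (m₁^{k₁} ⋯ mₙ^{kₙ})`. -/
noncomputable def LtStar (K : List ℕ) (z : ℝ) : ℝ :=
  ∑' m : Fin K.length → ℕ,
    if h : (∀ i, Odd (m i)) ∧ (∀ i j : Fin K.length, i < j → m j ≤ m i) ∧
        0 < K.length then
      z ^ (m ⟨0, h.2.2⟩) * ∏ i, ((m i : ℝ) ^ K.get i)⁻¹
    else 0

/-- `G0hz k n s z` is the sum of `L_K(z)` over all admissible indices `K` of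
weight `k`, depth `n` and height `s`. -/
noncomputable def G0hz (k n s : ℕ) (z : ℝ) : ℝ :=
  ∑' K : List ℕ,
    if Admissible K ∧ K.sum = k ∧ K.length = n ∧
        K.countP (fun i => decide (2 ≤ i)) = s then
      Lt K z
    else 0

/-- `G0hzStar k n s z` is the sum of `L*_K(z)` over all admissible indices `K` of
weight `k`, depth `n` and height `s`. -/
noncomputable def G0hzStar (k n s : ℕ) (z : ℝ) : ℝ :=
  ∑' K : List ℕ,
    if Admissible K ∧ K.sum = k ∧ K.length = n ∧
        K.countP (fun i => decide (2 ≤ i)) = s then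
      LtStar K z
    else 0


namespace WSF

/-- r -/
noncomputable def r (x : ℝ) (N i : ℕ) : ℝ :=
  ((1 + 2 * N : ℝ) + i) * (1 / 2 + i) * ((1 + x) / 2 + i) /
    ((1 + i) * ((1 + 2 * N : ℝ) + 1 / 2 + i) * ((1 + 2 * N : ℝ) + (1 - x) / 2 + i))

noncomputable def u (x : ℝ) (N n : ℕ) : ℝ := ∏ i ∈ Finset.range n, r x N i

noncomputable def Q (x : ℝ) (N n : ℕ) : ℝ :=
  let a : ℝ := 1 + 2 * N
  (a + 1/2) * (a + 3/2) * (a + (1-x)/2) * (a + (3-x)/2) / (a * (a+1)) *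
   ((a + n) * (a + n + 1)) / ((a + 1/2+n) * (a + 3/2+n) * (a + (1-x)/2+n) * (a + (3-x)/2+n))

noncomputable def RR (x : ℝ) (N : ℕ) : ℝ :=
  let a : ℝ := 1 + 2 * N
  (1 + a) ^ 2 * (a - x/2) * (1 + a - x/2) * (1 + a - x) /
   ((a - x) * ((a + 1/2) * (a + 3/2) * (a + (1-x)/2) * (a + (3-x)/2)))

lemma r_nonneg {x : ℝ} (h0 : 0 ≤ x) (h1 : x ≤ 1/4) (N i : ℕ) : 0 ≤ r x N i := by
  unfold r
  have : 0 ≤ 1 - x := by linarith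
  positivity

lemma u_nonneg {x : ℝ} (h0 : 0 ≤ x) (h1 : x ≤ 1/4) (N n : ℕ) : 0 ≤ u x N n :=
  Finset.prod_nonneg fun i _ => r_nonneg h0 h1 N i

lemma u_succ' (x : ℝ) (N n : ℕ) : u x N (n+1) = u x N n * r x N n := by
  simp [u, Finset.prod_range_succ]

lemma u_shift {x : ℝ} (h0 : 0 ≤ x) (h1 : x ≤ 1/4) (N n : ℕ) :
    u x (N+1) n = u x N n * Q x N n := by
  have hx : 0 < 1 - x := by linarith
  have hx3 : 0 < 3 - x := by linarith
  induction n with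
  | zero =>
    simp only [u, Q, Finset.range_zero, Finset.prod_empty, Nat.cast_zero, add_zero, one_mul]
    field_simp
  | succ n ih =>
    rw [u_succ', u_succ', ih, mul_assoc, mul_assoc]
    congr 1
    unfold r Q
    have hN : (0:ℝ) ≤ N := N.cast_nonneg
    have hn : (0:ℝ) ≤ n := n.cast_nonneg
    push_cast
    generalize (N:ℝ) = N' at *
    generalize (n:ℝ) = n' at *
    have e1 : (1 + 2 * (N' + 1)) + 1 / 2 + n' = (1 + 2 * N') + 1/2 + n' + 2 := by ring
    have p1 : (1 + 2 * N') + 1/2 + n' ≠ 0 := by positivity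
    have p2 : (1 + 2 * N') + 3/2 + n' ≠ 0 := by positivity
    have p1' : (1 + 2 * N') + 1/2 + (n'+1) ≠ 0 := by positivity
    have p2' : (1 + 2 * N') + 3/2 + (n'+1) ≠ 0 := by positivity
    have p3 : (1 + 2 * N') + (1-x)/2 + n' ≠ 0 := by positivity
    have p4 : (1 + 2 * N') + (3-x)/2 + n' ≠ 0 := by positivity
    have p3' : (1 + 2 * N') + (1-x)/2 + (n'+1) ≠ 0 := by positivity
    have p4' : (1 + 2 * N') + (3-x)/2 + (n'+1) ≠ 0 := by positivity
    have p5 : (1 + 2 * (N'+1)) + 1/2 + n' ≠ 0 := by positivity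
    have p6 : (1 + 2 * (N'+1)) + (1-x)/2 + n' ≠ 0 := by positivity
    have p7 : 1 + n' ≠ 0 := by positivity
    rw [div_mul_div_comm, div_mul_div_comm, div_eq_div_iff (by positivity) (by positivity)]
    have p8 : (1 + 2 * N') * (1 + 2 * N' + 1) ≠ 0 := by positivity
    field_simp
    ring

noncomputable def P (x : ℝ) (N n : ℕ) : ℝ :=
  let a : ℝ := 1 + 2 * N
  (1-x)/4/a - ((n + a) * (n + a + 1 + (a - x))) / (a - x)

noncomputable def G (x : ℝ) (N n : ℕ) : ℝ :=
  let a : ℝ := 1 + 2 * N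
  u x N n * (n * (P x N n / ((a + 1/2 + n) * (a + (1-x)/2 + n))))

lemma tele {x : ℝ} (h0 : 0 ≤ x) (h1 : x ≤ 1/4) (N n : ℕ) :
    u x N n - RR x N * u x (N+1) n = G x N (n+1) - G x N n := by
  have hx : 0 < 1 - x := by linarith
  have hx3 : 0 < 3 - x := by linarith
  rw [u_shift h0 h1]
  unfold G
  rw [u_succ']
  simp only
  suffices h : 1 - RR x N * Q x N n = r x N n * (((n+1:ℕ):ℝ) * (P x N (n+1) / ((1 + 2 * N + 1/2 + ((n+1:ℕ):ℝ)) * (1 + 2 * N + (1-x)/2 + ((n+1:ℕ):ℝ)))))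
     - (n * (P x N n / ((1 + 2 * N + 1/2 + n) * (1 + 2 * N + (1-x)/2 + n)))) by
    linear_combination u x N n * h
  unfold RR Q r P
  have hN : (0:ℝ) ≤ N := N.cast_nonneg
  have hn : (0:ℝ) ≤ n := n.cast_nonneg
  push_cast
  obtain ⟨a, ha⟩ : ∃ a : ℝ, a = 1 + 2 * (N:ℝ) := ⟨_, rfl⟩
  have ha1 : 1 ≤ a := by linarith
  rw [← ha]
  generalize (n:ℝ) = n' at *
  have p0 : a - x ≠ 0 := by linarith
  have p1 : a + 1/2 + n' ≠ 0 := by positivity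
  have p2 : a + 3/2 + n' ≠ 0 := by positivity
  have p3 : a + (1-x)/2 + n' ≠ 0 := by positivity
  have p4 : a + (3-x)/2 + n' ≠ 0 := by positivity
  have q1 : a + 1/2 ≠ 0 := by positivity
  have q2 : a + 3/2 ≠ 0 := by positivity
  have q3 : a + (1-x)/2 ≠ 0 := by positivity
  have q4 : a + (3-x)/2 ≠ 0 := by positivity
  have q5 : a ≠ 0 := by positivity
  have q6 : a + 1 ≠ 0 := by positivity
  have q7 : 1 + n' ≠ 0 := by positivity
  have e1 : a + 1/2 + (n'+1) = a + 3/2 + n' := by ring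
  have e2 : a + (1-x)/2 + (n'+1) = a + (3-x)/2 + n' := by ring
  rw [e1, e2]
  have E1 : (1 + a) ^ 2 * (a - x / 2) * (1 + a - x / 2) * (1 + a - x) / ((a - x) * ((a + 1 / 2) * (a + 3 / 2) * (a + (1 - x) / 2) * (a + (3 - x) / 2))) *
      ((a + 1 / 2) * (a + 3 / 2) * (a + (1 - x) / 2) * (a + (3 - x) / 2) / (a * (a + 1)) * ((a + n') * (a + n' + 1)) /
        ((a + 1 / 2 + n') * (a + 3 / 2 + n') * (a + (1 - x) / 2 + n') * (a + (3 - x) / 2 + n')))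
     = ((1 + a) * (a - x / 2) * (1 + a - x / 2) * (1 + a - x)  * ((a + n') * (a + n' + 1))) / ((a - x) * a * 
        ((a + 1 / 2 + n') * (a + 3 / 2 + n') * (a + (1 - x) / 2 + n') * (a + (3 - x) / 2 + n'))) := by
    generalize a + 1 / 2 + n' = v1 at *
    generalize a + 3 / 2 + n' = v2 at *
    generalize a + (1 - x) / 2 + n' = v3 at *
    generalize a + (3 - x) / 2 + n' = v4 at *
    generalize a + 1 / 2 = w1 at *
    generalize a + 3 / 2 = w2 at *
    generalize a + (1 - x) / 2 = w3 at *
    generalize a + (3 - x) / 2 = w4 at *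
    field_simp
    ring
  rw [E1]
  obtain ⟨v1, hv1⟩ : ∃ v, v = a + 1 / 2 + n' := ⟨_, rfl⟩
  obtain ⟨v2, hv2⟩ : ∃ v, v = a + 3 / 2 + n' := ⟨_, rfl⟩
  obtain ⟨v3, hv3⟩ : ∃ v, v = a + (1-x) / 2 + n' := ⟨_, rfl⟩
  obtain ⟨v4, hv4⟩ : ∃ v, v = a + (3-x) / 2 + n' := ⟨_, rfl⟩
  obtain ⟨d, hd⟩ : ∃ v, v = a - x := ⟨_, rfl⟩
  rw [← hv1, ← hv2, ← hv3, ← hv4, ← hd]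
  rw [← hv1] at p1
  rw [← hv2] at p2
  rw [← hv3] at p3
  rw [← hv4] at p4
  rw [← hd] at p0
  clear E1 e1 e2
  have e3 : n' + 1 = 1 + n' := by ring
  rw [e3]
  field_simp
  subst hv1 hv2 hv3 hv4 hd
  ring

end WSF

namespace WSF

lemma r_le {x : ℝ} (h0 : 0 ≤ x) (h1 : x ≤ 1/4) (N i : ℕ) : r x N i ≤ r x 0 i := by
  unfold r
  have hN : (0:ℝ) ≤ N := N.cast_nonneg
  have hn : (0:ℝ) ≤ i := i.cast_nonneg
  have hx : 0 < 1 - x := by linarith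
  push_cast
  generalize (N:ℝ) = a at *
  generalize (i:ℝ) = y at *
  rw [div_le_div_iff₀ (by positivity) (by positivity)]
  have key : (1 + 2 * a + y) * ((1 + 2*0 + 1/2 + y) * (1 + 2*0+ (1-x)/2 + y)) ≤
     (1 + 2*0 + y) * ((1 + 2 * a + 1/2 + y) * (1 + 2 * a + (1-x)/2 + y)) := by
    have : 0 ≤ 2 * a * ((1+y)*(1+y) - (1-x)/4 + 2 * a * (1+y)) := by
      apply mul_nonneg (by positivity)
      nlinarith [mul_nonneg hN hn]
    nlinarith
  have hp : 0 ≤ (1/2 + y) * ((1+x)/2 + y) * (1 + y) := by positivity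
  calc _ = ((1/2 + y) * ((1+x)/2 + y) * (1 + y)) * ((1 + 2 * a + y) * ((1 + 2*0 + 1/2 + y) * (1 + 2*0+ (1-x)/2 + y))) := by ring
    _ ≤ ((1/2 + y) * ((1+x)/2 + y) * (1 + y)) * ((1 + 2*0 + y) * ((1 + 2 * a + 1/2 + y) * (1 + 2 * a + (1-x)/2 + y))) :=
      mul_le_mul_of_nonneg_left key hp
    _ = _ := by ring

lemma r_zero {x : ℝ} (h1 : x ≤ 1/4) (i : ℕ) :
    r x 0 i = (2 * i + 1) * (2 * i + 1 + x) / ((2 * i + 3) * (2 * i + 3 - x)) := by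
  unfold r
  have hn : (0:ℝ) ≤ i := i.cast_nonneg
  push_cast
  generalize (i:ℝ) = y at *
  have e : (2 * y + 3 - x) ≠ 0 := by linarith
  have e2 : (1 + 2 * 0 + (1 - x) / 2 + y) ≠ 0 := by linarith
  rw [div_eq_div_iff (by positivity) (by positivity)]
  ring

lemma u_zero_sq {x : ℝ} (h0 : 0 ≤ x) (h1 : x ≤ 1/4) (n : ℕ) :
    u x 0 n ^ 2 * (2 * n + 1) ^ 3 ≤ 1 := by
  induction n with
  | zero => simp [u]
  | succ n ih =>
    rw [u_succ', r_zero h1]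
    refine le_trans ?_ ih
    rw [mul_pow, mul_assoc]
    apply mul_le_mul_of_nonneg_left _ (sq_nonneg _)
    have hn : (0:ℝ) ≤ n := n.cast_nonneg
    push_cast
    obtain ⟨y, hy⟩ : ∃ y : ℝ, y = 2 * n + 1 := ⟨_, rfl⟩
    have e1 : 2 * (n:ℝ) + 3 = y + 2 := by linarith
    have e2 : 2 * ((n:ℝ) + 1) + 1 = y + 2 := by linarith
    rw [e1, e2, ← hy]
    have hy1 : 1 ≤ y := by linarith
    have hp : 0 < y + 2 - x := by linarith
    rw [div_pow, div_mul_eq_mul_div, div_le_iff₀ (by positivity)]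
    have key : (y + x)^2 * (y + 2) ≤ y * (y + 2 - x)^2 := by
      have h2 : (y+x)^2 ≤ (y+1/4)^2 := by gcongr
      have h3 : (y + 7/4)^2 ≤ (y+2-x)^2 := by gcongr; linarith
      have h4 : (y + 1/4)^2 * (y+2) ≤ y * (y+7/4)^2 := by nlinarith
      calc _ ≤ (y+1/4)^2 * (y+2) := by gcongr
        _ ≤ _ := h4
        _ ≤ _ := by gcongr
    have hq : 0 ≤ y^2 * (y+2)^2 := by positivity
    nlinarith [mul_le_mul_of_nonneg_left key hq]

lemma u_le_zero {x : ℝ} (h0 : 0 ≤ x) (h1 : x ≤ 1/4) (N n : ℕ) : u x N n ≤ u x 0 n :=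
  Finset.prod_le_prod (fun i _ => r_nonneg h0 h1 N i) (fun i _ => r_le h0 h1 N i)

lemma u_zero_le {x : ℝ} (h0 : 0 ≤ x) (h1 : x ≤ 1/4) (n : ℕ) :
    u x 0 n ≤ ((n + 1 : ℕ) : ℝ) ^ (-(3/2) : ℝ) := by
  have h := u_zero_sq h0 h1 n
  have hn : (0:ℝ) ≤ n := n.cast_nonneg
  have hp : (0:ℝ) < ((n+1:ℕ):ℝ) := by positivity
  apply le_of_sq_le_sq _ (by positivity)
  rw [← Real.rpow_natCast (_ ^ (-(3/2) : ℝ)), ← Real.rpow_mul hp.le]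
  have : (-(3/2) : ℝ) * ((2:ℕ):ℝ) = -((3:ℕ):ℝ) := by norm_num
  rw [this, Real.rpow_neg hp.le, Real.rpow_natCast, ← one_div, le_div_iff₀ (by positivity)]
  refine le_trans ?_ h
  push_cast
  gcongr
  linarith

lemma u_summable {x : ℝ} (h0 : 0 ≤ x) (h1 : x ≤ 1/4) (N : ℕ) : Summable (u x N) := by
  refine Summable.of_nonneg_of_le (u_nonneg h0 h1 N)
    (fun n => (u_le_zero h0 h1 N n).trans (u_zero_le h0 h1 n)) ?_
  have := (Real.summable_nat_rpow (p := -(3/2))).2 (by norm_num)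
  exact (summable_nat_add_iff 1).2 this

lemma nu_tendsto {x : ℝ} (h0 : 0 ≤ x) (h1 : x ≤ 1/4) (N : ℕ) :
    Filter.Tendsto (fun n : ℕ => u x N n * n) Filter.atTop (nhds 0) := by
  have ht : Filter.Tendsto (fun n : ℕ => ((n + 1 : ℕ) : ℝ) ^ (-(1/2) : ℝ)) Filter.atTop (nhds 0) := by
    exact ((tendsto_rpow_neg_atTop (by norm_num : (0:ℝ) < 1/2)).comp
      tendsto_natCast_atTop_atTop).comp (Filter.tendsto_add_atTop_nat 1)
  refine squeeze_zero (fun n => mul_nonneg (u_nonneg h0 h1 N n) n.cast_nonneg) (fun n => ?_) ht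
  have hp : (0:ℝ) < ((n+1:ℕ):ℝ) := by positivity
  calc u x N n * n ≤ ((n + 1 : ℕ) : ℝ) ^ (-(3/2) : ℝ) * ((n+1:ℕ):ℝ) := by
        apply mul_le_mul ((u_le_zero h0 h1 N n).trans (u_zero_le h0 h1 n)) (by push_cast; linarith)
          n.cast_nonneg (by positivity)
    _ = _ := by
        rw [← Real.rpow_add_one hp.ne']; norm_num

lemma G_tendsto {x : ℝ} (h0 : 0 ≤ x) (h1 : x ≤ 1/4) (N : ℕ) :
    Filter.Tendsto (G x N) Filter.atTop (nhds 0) := by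
  have hN : (0:ℝ) ≤ N := N.cast_nonneg
  have hx : 0 < 1 - x := by linarith
  have h2 := (nu_tendsto h0 h1 N).mul_const 5
  rw [zero_mul] at h2
  refine squeeze_zero_norm (fun n => ?_) h2
  have hn : (0:ℝ) ≤ n := n.cast_nonneg
  unfold G
  simp only
  rw [← mul_assoc, norm_mul, Real.norm_of_nonneg (mul_nonneg (u_nonneg h0 h1 N n) hn)]
  apply mul_le_mul_of_nonneg_left _ (mul_nonneg (u_nonneg h0 h1 N n) hn)
  unfold P
  simp only
  obtain ⟨a, ha⟩ : ∃ a : ℝ, a = 1 + 2 * (N:ℝ) := ⟨_, rfl⟩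
  rw [← ha]
  have ha1 : 1 ≤ a := by linarith
  generalize (n:ℝ) = y at *
  have hd : 3/4 ≤ a - x := by linarith
  have hd' : 0 < a - x := by linarith
  rw [norm_div, Real.norm_of_nonneg (by positivity : (0:ℝ) ≤ (a + 1 / 2 + y) * (a + (1 - x) / 2 + y)),
    div_le_iff₀ (by positivity)]
  have b1 : 0 ≤ (1-x)/4/a := by positivity
  have b1' : (1-x)/4/a ≤ 1 := by
    rw [div_le_iff₀ (by positivity)]; linarith
  have b2 : 0 ≤ ((y + a) * (y + a + 1 + (a - x))) / (a - x) := by positivity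
  have b2' : ((y + a) * (y + a + 1 + (a - x))) / (a - x) ≤ 5 * ((a + 1 / 2 + y) * (a + (1 - x) / 2 + y)) := by
    rw [div_le_iff₀ hd']
    have k1 : y + a ≤ a + 1/2 + y := by linarith
    have k2 : y + a + 1 + (a - x) ≤ 5 * (a - x) * (a + (1 - x) / 2 + y) := by
      nlinarith [mul_nonneg hd'.le hn, mul_nonneg hd'.le (by linarith : 0 ≤ a - 1)]
    calc _ ≤ (a + 1/2 + y) * (5 * (a - x) * (a + (1 - x) / 2 + y)) := by
            apply mul_le_mul k1 k2 (by positivity) (by positivity)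
      _ = _ := by ring
  rw [Real.norm_eq_abs, abs_le]
  constructor
  · linarith
  · have : 1 ≤ 5 * ((a + 1 / 2 + y) * (a + (1 - x) / 2 + y)) := by
      nlinarith [mul_nonneg hn hn]
    linarith

lemma S_rec {x : ℝ} (h0 : 0 ≤ x) (h1 : x ≤ 1/4) (N : ℕ) :
    ∑' n, u x N n = RR x N * ∑' n, u x (N+1) n := by
  have hs : HasSum (fun n => u x N n - RR x N * u x (N+1) n)
     (∑' n, u x N n - RR x N * ∑' n, u x (N+1) n) :=
    (u_summable h0 h1 N).hasSum.sub ((u_summable h0 h1 (N+1)).hasSum.mul_left _)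
  have ht := hs.tendsto_sum_nat
  have e : ∀ m, ∑ n ∈ Finset.range m, (u x N n - RR x N * u x (N+1) n) = G x N m := by
    intro m
    rw [Finset.sum_congr rfl (fun n _ => tele h0 h1 N n), Finset.sum_range_sub]
    simp [G]
  simp only [e] at ht
  have := tendsto_nhds_unique ht (G_tendsto h0 h1 N)
  linarith

lemma r_le_one {x : ℝ} (h0 : 0 ≤ x) (h1 : x ≤ 1/4) (N i : ℕ) : r x N i ≤ 1 := by
  refine (r_le h0 h1 N i).trans ?_
  rw [r_zero h1]
  have hn : (0:ℝ) ≤ i := i.cast_nonneg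
  have : 0 < 2 * (i:ℝ) + 3 - x := by linarith
  rw [div_le_one (by positivity)]
  apply mul_le_mul <;> first | linarith | positivity

lemma S_tendsto {x : ℝ} (h0 : 0 ≤ x) (h1 : x ≤ 1/4) :
    Filter.Tendsto (fun N => ∑' n, u x N n) Filter.atTop (nhds 1) := by
  have e : (1:ℝ) = ∑' n : ℕ, if n = 0 then 1 else 0 := by simp
  rw [e]
  refine tendsto_tsum_of_dominated_convergence (bound := u x 0) (u_summable h0 h1 0) ?_ ?_
  · intro n
    by_cases hn : n = 0
    · subst hn; simp [u]
    · simp only [hn, if_false]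
      have ht : Filter.Tendsto (fun N : ℕ => 1 / ((N:ℝ) + 1)) Filter.atTop (nhds 0) :=
        tendsto_one_div_add_atTop_nhds_zero_nat
      refine squeeze_zero (fun N => u_nonneg h0 h1 N n) (fun N => ?_) ht
      obtain ⟨m, rfl⟩ := Nat.exists_eq_succ_of_ne_zero hn
      unfold u
      rw [Finset.prod_range_succ']
      have hN : (0:ℝ) ≤ N := N.cast_nonneg
      have hx : 0 < 1 - x := by linarith
      have k1 : ∏ i ∈ Finset.range m, r x N (i+1) ≤ 1 :=
        Finset.prod_le_one (fun i _ => r_nonneg h0 h1 N _) (fun i _ => r_le_one h0 h1 N _)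
      have k2 : r x N 0 ≤ 1 / ((N:ℝ) + 1) := by
        unfold r
        push_cast
        rw [div_le_div_iff₀ (by positivity) (by positivity)]
        have q1 : ((1 + 2 * N : ℝ) + 0) ≤ ((1 + 2 * N : ℝ) + 1 / 2 + 0) := by linarith
        have q2 : (1 / 2 + (0:ℝ)) * ((1 + x) / 2 + 0) * (N + 1) ≤ (1 + 0) * (1 + 2 * N + (1-x)/2 + 0) := by nlinarith
        have := mul_le_mul q1 q2 (by positivity) (by positivity)
        nlinarith
      calc _ ≤ 1 * (1 / ((N:ℝ) + 1)) := mul_le_mul k1 k2 (r_nonneg h0 h1 N 0) zero_le_one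
        _ = _ := one_mul _
  · refine Filter.Eventually.of_forall fun N n => ?_
    rw [Real.norm_of_nonneg (u_nonneg h0 h1 N n)]
    exact u_le_zero h0 h1 N n

lemma S_prod {x : ℝ} (h0 : 0 ≤ x) (h1 : x ≤ 1/4) (K : ℕ) :
    ∑' n, u x 0 n = (∏ N ∈ Finset.range K, RR x N) * ∑' n, u x K n := by
  induction K with
  | zero => simp
  | succ K ih => rw [ih, S_rec h0 h1 K, Finset.prod_range_succ, mul_assoc]

lemma RR_pos {x : ℝ} (h0 : 0 ≤ x) (h1 : x ≤ 1/4) (N : ℕ) : 0 < RR x N := by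
  unfold RR
  have hN : (0:ℝ) ≤ N := N.cast_nonneg
  have q1 : 0 < 1 + 2 * (N:ℝ) - x := by linarith
  have q2 : 0 < 1 + 2 * (N:ℝ) - x/2 := by linarith
  have q3 : 0 < 1 + (1 + 2 * (N:ℝ)) - x/2 := by linarith
  have q4 : 0 < 1 + (1 + 2 * (N:ℝ)) - x := by linarith
  have q5 : 0 < 1 - x := by linarith
  have q6 : 0 < 3 - x := by linarith
  positivity

noncomputable def ef (x : ℝ) (i : ℕ) : ℝ :=
  (1 - x / (2 * i + 2)) / (1 - x / (2 * i + 1))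

lemma ef_pos {x : ℝ} (h0 : 0 ≤ x) (h1 : x ≤ 1/4) (i : ℕ) : 0 < ef x i := by
  unfold ef
  have hN : (0:ℝ) ≤ i := i.cast_nonneg
  apply div_pos
  · rw [sub_pos, div_lt_one (by positivity)]; linarith
  · rw [sub_pos, div_lt_one (by positivity)]; linarith

lemma RR_ratio {x : ℝ} (h0 : 0 ≤ x) (h1 : x ≤ 1/4) (K : ℕ) :
    ∏ N ∈ Finset.range K, RR x N = (∏ N ∈ Finset.range K, RR 0 N) *
     ((1 - x) * (∏ i ∈ Finset.range (2 * K), ef x i) * (∏ i ∈ Finset.range K, ef x i) * ((4 * K + 1) / (4 * K + 1 - x))) := by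
  induction K with
  | zero =>
    have : (1 - x) ≠ 0 := by linarith
    simp
    field_simp
  | succ K ih =>
    rw [Finset.prod_range_succ, ih, Finset.prod_range_succ, Finset.prod_range_succ (fun i => ef x i) K,
      show 2 * (K+1) = 2 * K + 1 + 1 by ring, Finset.prod_range_succ, Finset.prod_range_succ]
    generalize ∏ N ∈ Finset.range K, RR 0 N = X1
    generalize ∏ i ∈ Finset.range (2*K), ef x i = X2
    generalize ∏ i ∈ Finset.range (K), ef x i = X3
    suffices h : (4 * (K:ℝ) + 1) / (4 * K + 1 - x) * RR x K = RR 0 K * (ef x (2 * K) * ef x (2*K+1) * ef x K * ((4 * ((K+1:ℕ):ℝ) + 1) / (4 * ((K+1:ℕ):ℝ) + 1 - x))) by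
      linear_combination X1 * X2 * X3 * (1-x) * h
    unfold RR ef
    push_cast
    have hN : (0:ℝ) ≤ K := K.cast_nonneg
    generalize (K:ℝ) = y at *
    have q0 : 4 * y + 1 - x ≠ 0 := by linarith
    have q1 : 4 * y + 2 - x ≠ 0 := by linarith
    have q2 : 4 * y + 3 - x ≠ 0 := by linarith
    have q3 : 4 * y + 5 - x ≠ 0 := by linarith
    have q4 : 2 * y + 1 - x ≠ 0 := by linarith
    have e1 : 1 + 2 * y - x = 2 * y + 1 - x := by ring
    have e2 : 1 + 2 * y + (1-x)/2 = (4 * y + 3 - x)/2 := by ring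
    have e3 : 1 + 2 * y + (3-x)/2 = (4 * y + 5 - x)/2 := by ring
    have e4 : 4 * (y+1) + 1 - x = 4 * y + 5 - x := by ring
    have e5 : 1 - x / (2 * (2 * y) + 1) = (4 * y + 1 - x)/(4 * y + 1) := by field_simp; ring
    have e6 : 1 - x / (2 * (2 * y + 1) + 1) = (4 * y + 3 - x)/(4 * y + 3) := by field_simp; ring
    have e7 : 1 - x / (2 * y + 1) = (2 * y + 1 - x)/(2 * y + 1) := by field_simp
    have e8 : 1 - x / (2 * (2 * y) + 2) = (4 * y + 2 - x)/(4 * y + 2) := by field_simp; ring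
    have e9 : 1 - x / (2 * (2 * y + 1) + 2) = (4 * y + 4 - x)/(4 * y + 4) := by field_simp; ring
    have e10 : 1 - x / (2 * y + 2) = (2 * y + 2 - x)/(2 * y + 2) := by field_simp
    rw [e1, e2, e3, e4, e5, e6, e7, e8, e9, e10]
    have f1 : 1 + 2 * y + (1-0)/2 = (4 * y + 3)/2 := by ring
    have f2 : 1 + 2 * y + (3-0)/2 = (4 * y + 5)/2 := by ring
    have f3 : 1 + 2 * y + 1/2 = (4 * y + 3)/2 := by ring
    have f4 : 1 + 2 * y + 3/2 = (4 * y + 5)/2 := by ring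
    have f5 : 4 * (y+1) + 1 = 4 * y + 5 := by ring
    rw [f1, f2, f3, f4, f5]
    simp only [sub_zero, zero_div]
    have g1 : 1 + 2 * y - x/2 = (4 * y + 2 - x)/2 := by ring
    have g2 : 1 + (1 + 2 * y) - x/2 = (4 * y + 4 - x)/2 := by ring
    have g3 : 1 + (1 + 2 * y) - x = 2 * y + 2 - x := by ring
    rw [g1, g2, g3]
    have s1 : 1 + 2 * y = 2 * y + 1 := by ring
    rw [s1]
    field_simp
    ring

/-- Value of `F`. -/
lemma S_eval {x L : ℝ} (h0 : 0 ≤ x) (h1 : x ≤ 1/4)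
    (hL : Filter.Tendsto (fun K => ∏ i ∈ Finset.range K, ef x i) Filter.atTop (nhds L)) :
    ∑' n, u x 0 n = (∑' n, u 0 0 n) * ((1 - x) * L ^ 2) := by
  have hS : ∀ x : ℝ, 0 ≤ x → x ≤ 1/4 → Filter.Tendsto (fun K => ∏ N ∈ Finset.range K, RR x N) Filter.atTop (nhds (∑' n, u x 0 n)) := by
    intro x h0 h1
    have h := (tendsto_const_nhds (x := ∑' n, u x 0 n) (f := Filter.atTop (α := ℕ))).div (S_tendsto h0 h1) one_ne_zero
    rw [div_one] at h
    refine h.congr' ?_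
    have hne := (S_tendsto h0 h1).eventually_ne one_ne_zero
    filter_upwards [hne] with K hK
    simp only [Pi.div_apply]
    rw [S_prod h0 h1 K]
    field_simp
  have hx := hS x h0 h1
  have hz := hS 0 le_rfl (by norm_num)
  have h2 : Filter.Tendsto (fun K => ∏ i ∈ Finset.range (2 * K), ef x i) Filter.atTop (nhds L) :=
    hL.comp (Filter.tendsto_id.const_mul_atTop' (by norm_num : 0 < 2))
  have h3 : Filter.Tendsto (fun K : ℕ => (4 * (K:ℝ) + 1) / (4 * K + 1 - x)) Filter.atTop (nhds 1) := by
    have : Filter.Tendsto (fun K : ℕ => 1 + x / (4 * (K:ℝ) + 1 - x)) Filter.atTop (nhds (1 + 0)) := by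
      apply tendsto_const_nhds.add
      apply tendsto_const_nhds.div_atTop
      have := ((tendsto_natCast_atTop_atTop (R := ℝ)).const_mul_atTop (by norm_num : (0:ℝ) < 4)).atTop_add (tendsto_const_nhds (x := 1 - x))
      refine this.congr fun K => by ring
    rw [add_zero] at this
    refine this.congr fun K => ?_
    have hN : (0:ℝ) ≤ K := K.cast_nonneg
    have : 4 * (K:ℝ) + 1 - x ≠ 0 := by linarith
    field_simp
    ring
  have hall := hz.mul (((tendsto_const_nhds (x := 1 - x)).mul h2 |>.mul hL).mul h3)
  have := tendsto_nhds_unique (hx.congr (RR_ratio h0 h1)) hall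
  rw [this]; ring

end WSF

namespace WSF

noncomputable def eta (n : ℕ) : ℝ := ∑' i : ℕ, (1 / (2 * (i:ℝ) + 1) ^ n - 1 / (2 * (i:ℝ) + 2) ^ n)

lemma eta_term_nonneg (n i : ℕ) : 0 ≤ 1 / (2 * (i:ℝ) + 1) ^ n - 1 / (2 * (i:ℝ) + 2) ^ n := by
  rw [sub_nonneg]
  apply one_div_le_one_div_of_le (by positivity)
  gcongr
  norm_num

lemma eta_partial (n K : ℕ) :
    ∑ i ∈ Finset.range K, (1 / (2 * (i:ℝ) + 1) ^ n - 1 / (2 * (i:ℝ) + 2) ^ n) ≤ 1 - 1 / (2 * (K:ℝ) + 1) ^ n := by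
  induction K with
  | zero => simp
  | succ K ih =>
    rw [Finset.sum_range_succ]
    have : 1 / (2 * ((K+1:ℕ):ℝ) + 1) ^ n ≤ 1 / (2 * (K:ℝ) + 2) ^ n := by
      apply one_div_le_one_div_of_le (by positivity)
      apply pow_le_pow_left₀ (by positivity)
      push_cast; linarith
    linarith

lemma eta_partial' (n K : ℕ) :
    ∑ i ∈ Finset.range K, (1 / (2 * (i:ℝ) + 1) ^ n - 1 / (2 * (i:ℝ) + 2) ^ n) ≤ 1 := by
  refine (eta_partial n K).trans ?_
  have : 0 ≤ 1 / (2 * (K:ℝ) + 1) ^ n := by positivity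
  linarith

lemma eta_summable (n : ℕ) :
    Summable (fun i : ℕ => 1 / (2 * (i:ℝ) + 1) ^ n - 1 / (2 * (i:ℝ) + 2) ^ n) :=
  summable_of_sum_range_le (eta_term_nonneg n) (eta_partial' n)

lemma eta_nonneg (n : ℕ) : 0 ≤ eta n := tsum_nonneg (eta_term_nonneg n)

lemma eta_le_one (n : ℕ) : eta n ≤ 1 :=
  Real.tsum_le_of_sum_range_le (eta_term_nonneg n) (eta_partial' n)

lemma eta_one : eta 1 = Real.log 2 := by
  have h1 := (eta_summable 1).hasSum.tendsto_sum_nat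
  have e : ∀ K : ℕ, ∑ i ∈ Finset.range K, (1 / (2 * (i:ℝ) + 1) ^ 1 - 1 / (2 * (i:ℝ) + 2) ^ 1)
      = (harmonic (2 * K) : ℝ) - (harmonic K : ℝ) := by
    intro K
    induction K with
    | zero => simp
    | succ K ih =>
      rw [Finset.sum_range_succ, ih, show 2 * (K+1) = 2 * K + 1 + 1 by ring, harmonic_succ,
        harmonic_succ, harmonic_succ]
      push_cast
      have : 2 * (K:ℝ) + 1 ≠ 0 := by positivity
      have : (K:ℝ) + 1 ≠ 0 := by positivity
      field_simp
      ring
  have h2 := Real.tendsto_harmonic_sub_log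
  have h3 := h2.comp (Filter.tendsto_id.const_mul_atTop' (by norm_num : 0 < 2))
  have h4 := (h3.sub h2).add_const (Real.log 2)
  rw [sub_self, zero_add] at h4
  refine tendsto_nhds_unique h1 (h4.congr' ?_)
  filter_upwards [Filter.eventually_gt_atTop 0] with K hK
  rw [e]
  simp only [Function.comp, id]
  push_cast
  have : (K:ℝ) ≠ 0 := by positivity
  rw [Real.log_mul (by norm_num) this]
  ring

lemma tval_summable {n : ℕ} (hn : 2 ≤ n) : Summable (fun m : ℕ => 1 / (2 * (m:ℝ) + 1) ^ n) := by
  have h : Summable (fun m : ℕ => 1 / ((m:ℝ) ^ n)) := Real.summable_one_div_nat_pow.2 hn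
  have := h.comp_injective (i := fun m : ℕ => 2 * m + 1) (fun a b h => by simpa using h)
  simpa [Function.comp_def] using this

lemma eta_eq {n : ℕ} (hn : 2 ≤ n) : eta n = 2 * ((2:ℝ) ^ (n-1) - 1) / ((2:ℝ)^n - 1) * tval n := by
  have h : Summable (fun m : ℕ => 1 / ((m:ℝ) ^ n)) := Real.summable_one_div_nat_pow.2 hn
  have hz : Summable (fun m : ℕ => 1 / (((m + 1 : ℕ):ℝ) ^ n)) := (summable_nat_add_iff 1).2 h
  have ho := tval_summable hn
  have e2 : ∀ i : ℕ, 1 / (2 * (i:ℝ) + 2) ^ n = (1 / 2 ^ n) * (1 / (((i + 1 : ℕ):ℝ) ^ n)) := by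
    intro i
    rw [show 2 * (i:ℝ) + 2 = 2 * ((i+1:ℕ):ℝ) by push_cast; ring, mul_pow]
    field_simp
  have he : HasSum (fun i : ℕ => 1 / (2 * (i:ℝ) + 2) ^ n) ((1/2^n) * ∑' m : ℕ, 1 / (((m + 1 : ℕ):ℝ) ^ n)) := by
    simp only [e2]
    exact hz.hasSum.mul_left _
  have hz2 : HasSum (fun m : ℕ => 1 / (((m + 1 : ℕ):ℝ) ^ n)) (tval n + (1/2^n) * ∑' m : ℕ, 1 / (((m + 1 : ℕ):ℝ) ^ n)) := by
    apply HasSum.even_add_odd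
    · have e : (fun k : ℕ => 1 / (((2 * k + 1 : ℕ):ℝ) ^ n)) = fun m : ℕ => 1 / (2 * (m:ℝ) + 1) ^ n := by
        funext m; push_cast; ring
      rw [e]; exact ho.hasSum
    · have e : (fun k : ℕ => 1 / (((2 * k + 1 + 1 : ℕ):ℝ) ^ n)) = fun m : ℕ => 1 / (2 * (m:ℝ) + 2) ^ n := by
        funext m; push_cast; ring
      rw [e]; exact he
  have hZ := hz2.tsum_eq
  have hE : eta n = tval n - (1/2^n) * ∑' m : ℕ, 1 / (((m + 1 : ℕ):ℝ) ^ n) :=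
    (ho.hasSum.sub he).tsum_eq
  generalize (∑' m : ℕ, 1 / (((m + 1 : ℕ):ℝ) ^ n)) = Z at *
  obtain ⟨k, rfl⟩ : ∃ k, n = k + 1 := ⟨n - 1, by omega⟩
  simp only [Nat.add_sub_cancel]
  have h2 : (1:ℝ) < 2 ^ (k+1) := one_lt_pow₀ (by norm_num) (by omega)
  have h3 : (2:ℝ) ^ (k+1) - 1 ≠ 0 := by linarith
  have h4 : (2:ℝ) ^ (k+1) ≠ 0 := by positivity
  have h5 : Z * (2 ^ (k+1) - 1) = 2 ^ (k+1) * tval (k+1) := by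
    field_simp at hZ; linarith
  rw [hE, eq_comm, div_mul_eq_mul_div, div_eq_iff h3]
  rw [sub_mul, mul_assoc _ Z, h5, mul_assoc]
  field_simp
  rw [pow_succ]; ring

lemma log_ef {x : ℝ} (h0 : 0 ≤ x) (h1 : x ≤ 1/4) (i : ℕ) :
    HasSum (fun n : ℕ => x ^ (n+1) / (n+1) * (1 / (2 * (i:ℝ) + 1) ^ (n+1) - 1 / (2 * (i:ℝ) + 2) ^ (n+1)))
      (Real.log (ef x i)) := by
  have hN : (0:ℝ) ≤ i := i.cast_nonneg
  have a1 : x / (2 * i + 1) < 1 := by rw [div_lt_one (by positivity)]; linarith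
  have a2 : x / (2 * i + 2) < 1 := by rw [div_lt_one (by positivity)]; linarith
  have b1 : 0 ≤ x / (2 * i + 1) := by positivity
  have b2 : 0 ≤ x / (2 * i + 2) := by positivity
  have c1 := Real.hasSum_pow_div_log_of_abs_lt_one (x := x / (2 * i + 1)) (by rw [abs_of_nonneg b1]; exact a1)
  have c2 := Real.hasSum_pow_div_log_of_abs_lt_one (x := x / (2 * i + 2)) (by rw [abs_of_nonneg b2]; exact a2)
  have := c1.sub c2
  unfold ef
  rw [Real.log_div (by linarith) (by linarith)]
  have e : (fun n : ℕ => x ^ (n+1) / (n+1) * (1 / (2 * (i:ℝ) + 1) ^ (n+1) - 1 / (2 * (i:ℝ) + 2) ^ (n+1)))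
      = fun n : ℕ => (x / (2 * (i:ℝ) + 1)) ^ (n + 1) / ((n:ℝ) + 1) - (x / (2 * i + 2)) ^ (n + 1) / ((n:ℝ) + 1) := by
    funext n
    rw [div_pow, div_pow]
    ring
  rw [e, show Real.log (1 - x / (2 * (i:ℝ) + 2)) - Real.log (1 - x / (2 * (i:ℝ) + 1)) =
    -Real.log (1 - x / (2 * (i:ℝ) + 1)) - -Real.log (1 - x / (2 * (i:ℝ) + 2)) by ring]
  exact this

lemma ef_tendsto {x : ℝ} (h0 : 0 ≤ x) (h1 : x ≤ 1/4) :
    Filter.Tendsto (fun K => ∏ i ∈ Finset.range K, ef x i) Filter.atTop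
      (nhds (Real.exp (∑' n : ℕ, x ^ (n+1) / (n+1) * eta (n+1)))) := by
  let f : ℕ × ℕ → ℝ := fun p => x ^ (p.1+1) / (p.1+1) * (1 / (2 * (p.2:ℝ) + 1) ^ (p.1+1) - 1 / (2 * (p.2:ℝ) + 2) ^ (p.1+1))
  have hf0 : 0 ≤ f := fun p => mul_nonneg (by positivity) (eta_term_nonneg _ _)
  have hrow : ∀ n, HasSum (fun i => f (n, i)) (x ^ (n+1) / (n+1) * eta (n+1)) :=
    fun n => (eta_summable (n+1)).hasSum.mul_left _
  have hs : Summable (fun n : ℕ => x ^ (n+1) / (n+1) * eta (n+1)) := by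
    refine Summable.of_nonneg_of_le (fun n => mul_nonneg (by positivity) (eta_nonneg _)) (fun n => ?_)
      (summable_geometric_of_lt_one h0 (by linarith : x < 1))
    calc _ ≤ x ^ n * 1 := by
          apply mul_le_mul _ (eta_le_one _) (eta_nonneg _) (by positivity)
          rw [div_le_iff₀ (by positivity), pow_succ]
          apply mul_le_mul_of_nonneg_left _ (by positivity)
          have : (0:ℝ) ≤ n := n.cast_nonneg
          linarith
      _ = _ := mul_one _
  have hsf : Summable f := by
    rw [summable_prod_of_nonneg hf0]
    refine ⟨fun n => (hrow n).summable, ?_⟩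
    simp only [(hrow _).tsum_eq]
    exact hs
  have htot : HasSum f (∑' n : ℕ, x ^ (n+1) / (n+1) * eta (n+1)) := by
    have := hsf.hasSum.prod_fiberwise hrow
    rw [this.tsum_eq]
    exact hsf.hasSum
  have hsw : HasSum (fun p : ℕ × ℕ => f p.swap) (∑' n : ℕ, x ^ (n+1) / (n+1) * eta (n+1)) :=
    (Equiv.prodComm ℕ ℕ).hasSum_iff.2 htot
  have hcol := hsw.prod_fiberwise (fun i => log_ef h0 h1 i)
  have := (Real.continuous_exp.tendsto _).comp hcol.tendsto_sum_nat
  refine this.congr fun K => ?_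
  simp only [Function.comp]
  rw [Real.exp_sum]
  exact Finset.prod_congr rfl fun i _ => Real.exp_log (ef_pos h0 h1 i)

/-- nondependent cons equivalence -/
def consE (n : ℕ) : ℕ × (Fin n → ℕ) ≃ (Fin (n+1) → ℕ) where
  toFun p := Fin.cons p.1 p.2
  invFun v := (v 0, fun i => v i.succ)
  left_inv p := by simp
  right_inv v := by
    funext i
    refine Fin.cases ?_ (fun j => ?_) i <;> simp

lemma consE_apply (n : ℕ) (p : ℕ × (Fin n → ℕ)) : consE n p = Fin.cons p.1 p.2 := rfl

lemma hasSum_tuple {f : ℕ → ℝ} {s : ℝ} (hf : ∀ i, 0 ≤ f i) (hs : HasSum f s) (n : ℕ) :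
    HasSum (fun v : Fin n → ℕ => ∏ i, f (v i)) (s ^ n) := by
  induction n with
  | zero => simpa using hasSum_unique (fun v : Fin 0 → ℕ => ∏ i, f (v i))
  | succ n ih =>
    rw [← (consE n).hasSum_iff]
    have hsm : Summable (fun p : ℕ × (Fin n → ℕ) => f p.1 * ∏ i, f (p.2 i)) :=
      Summable.mul_of_nonneg (f := f) (g := fun v : Fin n → ℕ => ∏ i, f (v i)) hs.summable ih.summable
        (Pi.le_def.2 hf) (Pi.le_def.2 fun v => Finset.prod_nonneg fun i _ => hf _)
    have := hs.mul ih hsm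
    rw [pow_succ']
    have e : ((fun v : Fin (n+1) → ℕ => ∏ i, f (v i)) ∘ consE n)
        = fun p : ℕ × (Fin n → ℕ) => f p.1 * ∏ i, f (p.2 i) := by
      funext p
      simp only [Function.comp, consE_apply, Fin.prod_univ_succ, Fin.cons_zero, Fin.cons_succ]
    rw [e]
    exact this

lemma hasSum_list {f : ℕ → ℝ} {s : ℝ} (hf : ∀ i, 0 ≤ f i) (hs : HasSum f s) :
    HasSum (fun L : List ℕ => (L.map f).prod / L.length.factorial) (Real.exp s) := by
  rw [← List.equivSigmaTuple.symm.hasSum_iff]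
  have e : ((fun L : List ℕ => (L.map f).prod / L.length.factorial) ∘ List.equivSigmaTuple.symm)
      = fun p : Σ n, Fin n → ℕ => (∏ i, f (p.2 i)) / p.1.factorial := by
    funext p
    simp [List.prod_ofFn, List.map_ofFn]
  rw [e]
  have hexp : HasSum (fun n : ℕ => s ^ n / n.factorial) (Real.exp s) := by
    rw [Real.exp_eq_exp_ℝ]
    exact NormedSpace.expSeries_div_hasSum_exp s
  have hr : ∀ n : ℕ, HasSum (fun v : Fin n → ℕ => (∏ i, f (v i)) / n.factorial) (s ^ n / n.factorial) :=
    fun n => (hasSum_tuple hf hs n).div_const _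
  refine HasSum.sigma_of_hasSum hexp hr ?_
  rw [summable_sigma_of_nonneg]
  · refine ⟨fun n => (hr n).summable, ?_⟩
    simp only [(hr _).tsum_eq]
    exact hexp.summable
  · rintro ⟨n, v⟩
    exact div_nonneg (Finset.prod_nonneg fun i _ => hf _) (by positivity)

end WSF

namespace WSF

noncomputable def RHS (k : ℕ) : ℝ := ∑' p : ℕ × List ℕ,
          if (∀ i ∈ p.2, 2 ≤ i) ∧ p.1 + p.2.sum + 2 = k then
            (2 : ℝ) ^ (p.1 + 2 * p.2.length) /
                ((p.1.factorial : ℝ) * (p.2.length.factorial : ℝ)) *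
              tval 2 * (Real.log 2) ^ p.1 *
              (p.2.map fun i =>
                ((2 : ℝ) ^ (i - 1) - 1) * tval i / ((i : ℝ) * ((2 : ℝ) ^ i - 1))).prod
          else 0

noncomputable def fx (x : ℝ) (i : ℕ) : ℝ := if 2 ≤ i then 2 * eta i / i * x ^ i else 0

lemma fx_nonneg {x : ℝ} (h0 : 0 ≤ x) (i : ℕ) : 0 ≤ fx x i := by
  unfold fx
  split_ifs
  · have := eta_nonneg i
    positivity
  · exact le_rfl

lemma eta_series_summable {x : ℝ} (h0 : 0 ≤ x) (h1 : x ≤ 1/4) :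
    Summable (fun n : ℕ => x ^ (n+1) / (n+1) * eta (n+1)) := by
  refine Summable.of_nonneg_of_le (fun n => mul_nonneg (by positivity) (eta_nonneg _)) (fun n => ?_)
    (summable_geometric_of_lt_one h0 (by linarith : x < 1))
  calc _ ≤ x ^ n * 1 := by
        apply mul_le_mul _ (eta_le_one _) (eta_nonneg _) (by positivity)
        rw [div_le_iff₀ (by positivity), pow_succ]
        apply mul_le_mul_of_nonneg_left _ (by positivity)
        have : (0:ℝ) ≤ n := n.cast_nonneg
        linarith
    _ = _ := mul_one _

lemma fx_hasSum {x : ℝ} (h0 : 0 ≤ x) (h1 : x ≤ 1/4) :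
    HasSum (fx x) (2 * (∑' n : ℕ, x ^ (n+1) / (n+1) * eta (n+1)) - 2 * Real.log 2 * x) := by
  have h := (eta_series_summable h0 h1).hasSum.mul_left 2
  rw [← hasSum_nat_add_iff' 1] at h
  rw [← hasSum_nat_add_iff' 2]
  have e : (fun n : ℕ => fx x (n + 2)) = fun n : ℕ => 2 * (x ^ (n+1+1) / ((n+1:ℕ)+1) * eta (n+1+1)) := by
    funext n
    simp only [fx]
    rw [if_pos (by omega)]
    push_cast
    ring
  rw [e]
  convert! h using 1
  simp [Finset.sum_range_succ, fx, eta_one]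
  ring

lemma fx_prod (x : ℝ) (L : List ℕ) : (L.map (fx x)).prod = if (∀ i ∈ L, 2 ≤ i) then
    4 ^ L.length * (L.map fun i =>
                ((2 : ℝ) ^ (i - 1) - 1) * tval i / ((i : ℝ) * ((2 : ℝ) ^ i - 1))).prod * x ^ L.sum else 0 := by
  induction L with
  | nil => simp
  | cons a L ih =>
    rw [List.map_cons, List.prod_cons, ih]
    by_cases ha : 2 ≤ a
    · by_cases hL : ∀ i ∈ L, 2 ≤ i
      · rw [if_pos hL, if_pos (by simpa using ⟨ha, hL⟩), fx, if_pos ha, eta_eq ha]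
        rw [List.map_cons, List.prod_cons, List.length_cons, List.sum_cons, pow_succ, pow_add]
        rw [mul_comm (a:ℝ) ((2:ℝ)^a-1)]
        field_simp
        ring
      · rw [if_neg hL, if_neg (by simp only [List.forall_mem_cons]; tauto), mul_zero]
    · rw [fx, if_neg ha, zero_mul, if_neg (fun h => ha (h a List.mem_cons_self))]

lemma RHS_hasSum {x : ℝ} (h0 : 0 ≤ x) (h1 : x ≤ 1/4) :
    HasSum (fun c : ℕ => RHS (c + 2) * x ^ c)
      (tval 2 * Real.exp (∑' n : ℕ, x ^ (n+1) / (n+1) * eta (n+1)) ^ 2) := by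
  set S := ∑' n : ℕ, x ^ (n+1) / (n+1) * eta (n+1)
  have hl2 : 0 ≤ Real.log 2 := Real.log_nonneg (by norm_num)
  have hexp : HasSum (fun n : ℕ => (2 * Real.log 2 * x) ^ n / n.factorial) (Real.exp (2 * Real.log 2 * x)) := by
    rw [Real.exp_eq_exp_ℝ]
    exact NormedSpace.expSeries_div_hasSum_exp _
  have hl := hasSum_list (fx_nonneg h0) (fx_hasSum h0 h1)
  have hsm : Summable (fun p : ℕ × List ℕ => ((2 * Real.log 2 * x) ^ p.1 / p.1.factorial) *
      ((p.2.map (fx x)).prod / p.2.length.factorial)) := by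
    refine Summable.mul_of_nonneg (f := fun n : ℕ => (2 * Real.log 2 * x) ^ n / n.factorial)
      (g := fun L : List ℕ => (L.map (fx x)).prod / L.length.factorial) hexp.summable hl.summable
      (Pi.le_def.2 fun n => ?_) (Pi.le_def.2 fun L => ?_)
    · simp only [Pi.zero_apply]; positivity
    · simp only [Pi.zero_apply]
      refine div_nonneg (List.prod_nonneg ?_) (by positivity)
      intro a ha
      obtain ⟨i, _, rfl⟩ := List.mem_map.1 ha
      exact fx_nonneg h0 i
  have hp := (hexp.mul hl hsm).mul_left (tval 2)
  have := HasSum.tsum_fiberwise hp (fun p : ℕ × List ℕ => p.1 + p.2.sum)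
  rw [← Real.exp_add, show 2 * Real.log 2 * x + (2 * S - 2 * Real.log 2 * x) = S + S by ring,
    Real.exp_add, ← pow_two] at this
  convert! this using 1
  funext c
  rw [tsum_subtype ((fun p : ℕ × List ℕ => p.1 + p.2.sum) ⁻¹' {c}) (fun p : ℕ × List ℕ => tval 2 * (((2 * Real.log 2 * x) ^ p.1 / p.1.factorial) *
      ((p.2.map (fx x)).prod / p.2.length.factorial))), RHS, ← tsum_mul_right]
  refine tsum_congr fun p => ?_
  classical
  rw [Set.indicator_apply]
  by_cases hc : p.1 + p.2.sum = c
  · have hm : p ∈ (fun p : ℕ × List ℕ => p.1 + p.2.sum) ⁻¹' {c} := hc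
    rw [if_pos hm, fx_prod]
    by_cases hL : ∀ i ∈ p.2, 2 ≤ i
    · have hm2 : (∀ i ∈ p.2, 2 ≤ i) ∧ p.1 + p.2.sum + 2 = c + 2 := ⟨hL, by omega⟩
      rw [if_pos hm2, if_pos hL, pow_add, pow_mul, mul_pow, mul_pow, ← hc, pow_add x]
      norm_num
      field_simp
    · have hm2 : ¬ ((∀ i ∈ p.2, 2 ≤ i) ∧ p.1 + p.2.sum + 2 = c + 2) := fun h => hL h.1
      rw [if_neg hm2, if_neg hL]; simp
  · have hm : ¬ p ∈ (fun p : ℕ × List ℕ => p.1 + p.2.sum) ⁻¹' {c} := hc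
    have hm2 : ¬ ((∀ i ∈ p.2, 2 ≤ i) ∧ p.1 + p.2.sum + 2 = c + 2) := fun h => hc (by omega)
    rw [if_neg hm, if_neg hm2, zero_mul]

end WSF

namespace WSF

lemma unique_coeff {d : ℕ → ℝ} (h : ∀ x : ℝ, 0 ≤ x → x ≤ 1/4 → HasSum (fun p => d p * x ^ p) 0) (n : ℕ) :
    d n = 0 := by
  induction n using Nat.strong_induction_on with
  | _ n ih =>
  have key : ∀ x : ℝ, 0 < x → x ≤ 1/4 → HasSum (fun p => d (p + n) * x ^ p) 0 := by
    intro x h0 h1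
    have h2 := h x h0.le h1
    rw [← hasSum_nat_add_iff' n] at h2
    rw [Finset.sum_eq_zero (fun i hi => by rw [ih i (Finset.mem_range.1 hi), zero_mul]), sub_zero] at h2
    have h3 := h2.mul_left ((x ^ n)⁻¹)
    rw [mul_zero] at h3
    have e : (fun p => d (p + n) * x ^ p) = fun p => (x ^ n)⁻¹ * (d (p + n) * x ^ (p + n)) := by
      funext p
      rw [pow_add]
      field_simp
    rw [e]; exact h3
  have hs : Summable (fun p => |d (p + n) * (1/4 : ℝ) ^ p|) :=
    (key (1/4) (by norm_num) le_rfl).summable.abs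
  have hc : ContinuousOn (fun x : ℝ => ∑' p, d (p + n) * x ^ p) (Set.Icc 0 (1/4)) := by
    refine continuousOn_tsum (fun p => by fun_prop) hs (fun p x hx => ?_)
    rw [Real.norm_eq_abs, abs_mul, abs_mul, abs_pow, abs_pow]
    apply mul_le_mul_of_nonneg_left _ (abs_nonneg _)
    apply pow_le_pow_left₀ (abs_nonneg _)
    rw [abs_of_nonneg hx.1, abs_of_nonneg (by norm_num)]
    exact hx.2
  have ht : Filter.Tendsto (fun x : ℝ => ∑' p, d (p + n) * x ^ p) (nhdsWithin 0 (Set.Ioc 0 (1/4)))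
      (nhds (∑' p, d (p + n) * (0:ℝ) ^ p)) :=
    (hc 0 ⟨le_rfl, by norm_num⟩).mono_left (nhdsWithin_mono _ Set.Ioc_subset_Icc_self)
  have ht0 : Filter.Tendsto (fun x : ℝ => ∑' p, d (p + n) * x ^ p) (nhdsWithin 0 (Set.Ioc 0 (1/4)))
      (nhds 0) := by
    refine tendsto_const_nhds.congr' ?_
    filter_upwards [self_mem_nhdsWithin] with x hx
    exact (key x hx.1 hx.2).tsum_eq.symm
  have hne : (nhdsWithin (0:ℝ) (Set.Ioc 0 (1/4))).NeBot := by
    rw [nhdsWithin_Ioc_eq_nhdsGT (by norm_num)]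
    infer_instance
  have := tendsto_nhds_unique ht ht0
  rw [tsum_eq_single 0 (fun p hp => by rw [zero_pow hp, mul_zero])] at this
  simpa using this

end WSF

namespace WSF

noncomputable def tn (δ : ℕ) : List ℕ → ℕ → ℝ
  | [], _ => 1
  | k :: K, M => ∑ j ∈ Finset.range M, (((2 * j + 1 : ℕ) : ℝ) ^ k)⁻¹ * tn δ K (j + δ)

lemma tn_nonneg (δ : ℕ) (K : List ℕ) (M : ℕ) : 0 ≤ tn δ K M := by
  induction K generalizing M with
  | nil => simp [tn]
  | cons k K ih =>
    rw [tn]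
    exact Finset.sum_nonneg fun j _ => mul_nonneg (by positivity) (ih _)

lemma sqrt_step (j : ℕ) : Real.sqrt (j + 2) * (((2 * j + 1 : ℕ) : ℝ))⁻¹ ≤ 4 * (Real.sqrt (j + 2) - Real.sqrt (j + 1)) := by
  have hj : (0:ℝ) ≤ j := j.cast_nonneg
  rw [← div_eq_mul_inv, div_le_iff₀ (by positivity)]
  have ha := Real.sq_sqrt (show (0:ℝ) ≤ j + 2 by positivity)
  have hb := Real.sq_sqrt (show (0:ℝ) ≤ j + 1 by positivity)
  have hab : Real.sqrt (j + 1) ≤ Real.sqrt (j + 2) := Real.sqrt_le_sqrt (by linarith)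
  have hbp : 0 < Real.sqrt ((j:ℝ) + 1) := Real.sqrt_pos.2 (by positivity)
  set a := Real.sqrt ((j:ℝ) + 2)
  set b := Real.sqrt ((j:ℝ) + 1)
  push_cast
  have h1 : (a - b) * (a + b) = 1 := by nlinarith
  have hap : 0 < a + b := by linarith
  refine le_of_mul_le_mul_right ?_ hap
  have : 4 * (a - b) * (2 * (j:ℝ) + 1) * (a + b) = 4 * (2 * j + 1) := by
    calc _ = 4 * (2 * (j:ℝ) + 1) * ((a - b) * (a + b)) := by ring
      _ = _ := by rw [h1, mul_one]
  rw [this]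
  nlinarith

lemma tn_le {δ : ℕ} (hδ : δ ≤ 1) (K : List ℕ) (hK : ∀ i ∈ K, 1 ≤ i) (M : ℕ) :
    tn δ K M ≤ 4 ^ K.length * Real.sqrt (M + 1) := by
  induction K generalizing M with
  | nil =>
    simp only [tn, List.length_nil, pow_zero, one_mul]
    rw [Real.one_le_sqrt]
    have : (0:ℝ) ≤ M := M.cast_nonneg
    linarith
  | cons k K ih =>
    have hk : 1 ≤ k := hK k List.mem_cons_self
    have hK' : ∀ i ∈ K, 1 ≤ i := fun i hi => hK i (List.mem_cons_of_mem _ hi)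
    have h4 : (0:ℝ) ≤ 4 ^ K.length := by positivity
    rw [tn, List.length_cons]
    have step : ∀ j : ℕ, (((2 * j + 1 : ℕ) : ℝ) ^ k)⁻¹ * tn δ K (j + δ) ≤
        4 ^ K.length * (4 * (Real.sqrt (j + 2) - Real.sqrt (j + 1))) := by
      intro j
      have e1 : (((2 * j + 1 : ℕ) : ℝ) ^ k)⁻¹ ≤ ((2 * j + 1 : ℕ) : ℝ)⁻¹ := by
        apply inv_anti₀ (by positivity)
        apply le_self_pow₀ _ (by omega)
        push_cast
        have : (0:ℝ) ≤ j := j.cast_nonneg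
        linarith
      have e2 : tn δ K (j + δ) ≤ 4 ^ K.length * Real.sqrt (j + 2) := by
        refine (ih hK' _).trans (mul_le_mul_of_nonneg_left (Real.sqrt_le_sqrt ?_) h4)
        have : (δ:ℝ) ≤ 1 := by exact_mod_cast hδ
        push_cast
        linarith
      calc _ ≤ ((2 * j + 1 : ℕ) : ℝ)⁻¹ * (4 ^ K.length * Real.sqrt (j + 2)) :=
            mul_le_mul e1 e2 (tn_nonneg _ _ _) (by positivity)
        _ = 4 ^ K.length * (Real.sqrt (j + 2) * ((2 * j + 1 : ℕ) : ℝ)⁻¹) := by ring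
        _ ≤ _ := mul_le_mul_of_nonneg_left (sqrt_step j) h4
    have tel : ∀ N : ℕ, ∑ j ∈ Finset.range N, 4 ^ K.length * (4 * (Real.sqrt ((j:ℝ) + 2) - Real.sqrt (j + 1)))
        = 4 ^ (K.length + 1) * (Real.sqrt (N + 1) - 1) := by
      intro N
      induction N with
      | zero => simp
      | succ N ihN =>
        rw [Finset.sum_range_succ, ihN]
        push_cast
        rw [show (N:ℝ) + 1 + 1 = N + 2 by ring]
        ring
    refine (Finset.sum_le_sum fun j _ => step j).trans ?_
    rw [tel]
    apply mul_le_mul_of_nonneg_left _ (by positivity)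
    linarith

lemma term_summable {δ : ℕ} (hδ : δ ≤ 1) {k : ℕ} (hk : 2 ≤ k) (K : List ℕ) (hK : ∀ i ∈ K, 1 ≤ i) :
    Summable (fun j : ℕ => (((2 * j + 1 : ℕ) : ℝ) ^ k)⁻¹ * tn δ K (j + δ)) := by
  have hs : Summable (fun j : ℕ => ((j + 1 : ℕ) : ℝ) ^ (-(3/2) : ℝ)) :=
    (summable_nat_add_iff 1).2 (Real.summable_nat_rpow.2 (by norm_num))
  refine Summable.of_nonneg_of_le (fun j => mul_nonneg (by positivity) (tn_nonneg _ _ _)) (fun j => ?_)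
    (hs.mul_left (4 ^ K.length * 2))
  have hj : (0:ℝ) ≤ j := j.cast_nonneg
  have hp : (0:ℝ) < ((j + 1 : ℕ) : ℝ) := by positivity
  have e1 : (((2 * j + 1 : ℕ) : ℝ) ^ k)⁻¹ ≤ (((j + 1 : ℕ) : ℝ) ^ 2)⁻¹ := by
    apply inv_anti₀ (by positivity)
    calc ((j + 1 : ℕ) : ℝ) ^ 2 ≤ ((j + 1 : ℕ) : ℝ) ^ k := pow_le_pow_right₀ (by push_cast; linarith) hk
      _ ≤ _ := by
        apply pow_le_pow_left₀ (by positivity)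
        push_cast; linarith
  have e2 : tn δ K (j + δ) ≤ 4 ^ K.length * (2 * Real.sqrt ((j + 1 : ℕ) : ℝ)) := by
    refine (tn_le hδ K hK _).trans (mul_le_mul_of_nonneg_left ?_ (by positivity))
    have : (δ:ℝ) ≤ 1 := by exact_mod_cast hδ
    rw [show (2:ℝ) = Real.sqrt (2 ^ 2) by rw [Real.sqrt_sq (by norm_num)], ← Real.sqrt_mul (by norm_num)]
    apply Real.sqrt_le_sqrt
    push_cast
    linarith
  have e3 : ((j + 1 : ℕ) : ℝ) ^ (-(3/2) : ℝ) = (((j + 1 : ℕ) : ℝ) ^ 2)⁻¹ * Real.sqrt ((j + 1 : ℕ) : ℝ) := by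
    rw [Real.sqrt_eq_rpow, ← Real.rpow_natCast _ 2, ← Real.rpow_neg hp.le, ← Real.rpow_add hp]
    norm_num
  rw [e3]
  calc _ ≤ (((j + 1 : ℕ) : ℝ) ^ 2)⁻¹ * (4 ^ K.length * (2 * Real.sqrt ((j + 1 : ℕ) : ℝ))) :=
        mul_le_mul e1 e2 (tn_nonneg _ _ _) (by positivity)
    _ = _ := by ring

end WSF

namespace WSF

def cond (δ : ℕ) {n : ℕ} (m : Fin n → ℕ) : Prop :=
  (∀ i, Odd (m i)) ∧ (∀ i j : Fin n, i < j → m j < m i + 2 * δ)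

open Classical in
noncomputable def gK (δ : ℕ) (K : List ℕ) (S : (Fin K.length → ℕ) → Prop) (m : Fin K.length → ℕ) : ℝ :=
  if cond δ m ∧ S m then ∏ i, ((m i : ℝ) ^ K.get i)⁻¹ else 0

lemma gK_nonneg (δ : ℕ) (K : List ℕ) (S : (Fin K.length → ℕ) → Prop) (m : Fin K.length → ℕ) :
    0 ≤ gK δ K S m := by
  unfold gK
  split_ifs
  · exact Finset.prod_nonneg fun i _ => by positivity
  · exact le_rfl

lemma cond_cons {δ n : ℕ} (a : ℕ) (v : Fin n → ℕ) :
    cond δ (Fin.cons a v : Fin (n+1) → ℕ) ↔ Odd a ∧ cond δ v ∧ ∀ i, v i < a + 2 * δ := by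
  unfold cond
  constructor
  · rintro ⟨h1, h2⟩
    refine ⟨by simpa using h1 0, ⟨fun i => by simpa using h1 i.succ, fun i j hij => ?_⟩, fun i => ?_⟩
    · simpa using h2 i.succ j.succ (by simpa using hij)
    · simpa using h2 0 i.succ (Fin.succ_pos i)
  · rintro ⟨h1, ⟨h2, h3⟩, h4⟩
    refine ⟨fun i => ?_, fun i j => ?_⟩
    · refine Fin.cases ?_ (fun i => ?_) i
      · simpa using h1
      · simpa using h2 i
    · refine Fin.cases ?_ (fun i => ?_) i
      · refine Fin.cases ?_ (fun j => ?_) j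
        · intro h; exact absurd h (lt_irrefl _)
        · intro _; simpa using h4 j
      · refine Fin.cases ?_ (fun j => ?_) j
        · intro h; exact absurd h (by simp)
        · intro h; simpa using h3 i j (by simpa using h)

open Classical in
lemma hasSum_cons {δ k : ℕ} (K : List ℕ) (S : ℕ → Prop) (T : ℝ)
    (ih : ∀ M, HasSum (gK δ K (fun m => ∀ i, m i < 2 * M + 1)) (tn δ K M))
    (hT : HasSum (fun j : ℕ => if S j then (((2 * j + 1 : ℕ) : ℝ) ^ k)⁻¹ * tn δ K (j + δ) else 0) T) :
    HasSum (gK δ (k :: K) (fun m => S (m ⟨0, by simp⟩ / 2))) T := by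
  have hinj : Function.Injective (fun j : ℕ => 2 * j + 1) := fun a b h => by simpa using h
  let R : ℕ → ℝ := fun a => if Odd a ∧ S (a / 2) then ((a : ℝ) ^ k)⁻¹ * tn δ K (a / 2 + δ) else 0
  have hR : HasSum R T := by
    rw [← hinj.hasSum_iff]
    · have e : (R ∘ fun j : ℕ => 2 * j + 1) =
          fun j : ℕ => if S j then (((2 * j + 1 : ℕ) : ℝ) ^ k)⁻¹ * tn δ K (j + δ) else 0 := by
        funext j
        have h1 : (2 * j + 1) / 2 = j := by omega
        have h2 : Odd (2 * j + 1) := ⟨j, rfl⟩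
        simp only [R, Function.comp, h1, h2, true_and]
      rw [e]; exact hT
    · intro a ha
      simp only [R]
      rw [if_neg]
      rintro ⟨⟨j, hj⟩, _⟩
      exact ha ⟨j, hj.symm⟩
  refine (Equiv.hasSum_iff (f := gK δ (k :: K) (fun m => S (m ⟨0, by simp⟩ / 2))) (consE K.length)).1 ?_
  let f : ℕ × (Fin K.length → ℕ) → ℝ := fun p =>
    if Odd p.1 ∧ S (p.1 / 2) then ((p.1 : ℝ) ^ k)⁻¹ * gK δ K (fun m => ∀ i, m i < 2 * (p.1 / 2 + δ) + 1) p.2 else 0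
  have e : (gK δ (k :: K) (fun m => S (m ⟨0, by simp⟩ / 2))) ∘ (consE K.length) = f := by
    funext p
    obtain ⟨a, v⟩ := p
    simp only [Function.comp, consE_apply, f]
    unfold gK
    have h0 : (Fin.cons a v : Fin (K.length+1) → ℕ) ⟨0, by simp⟩ = a := rfl
    have hc := cond_cons (δ := δ) a v
    have hprod : ∏ i : Fin (k :: K).length, (((Fin.cons a v : Fin (K.length+1) → ℕ) i : ℝ) ^ (k :: K).get i)⁻¹
        = ((a:ℝ) ^ k)⁻¹ * ∏ i, ((v i : ℝ) ^ K.get i)⁻¹ := by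
      refine (Fin.prod_univ_succ _).trans ?_
      rfl
    rw [hprod]
    by_cases ha : Odd a
    · obtain ⟨j, rfl⟩ := ha
      have h2 : (2 * j + 1) / 2 = j := by omega
      by_cases hS : S j
      · have q : (Odd (2 * j + 1) ∧ S ((2 * j + 1) / 2)) := ⟨⟨j, rfl⟩, by rw [h2]; exact hS⟩
        rw [if_pos q]
        by_cases hv : cond δ v ∧ ∀ i, v i < 2 * ((2 * j + 1) / 2 + δ) + 1
        · rw [if_pos hv, if_pos]
          refine ⟨hc.2 ⟨⟨j, rfl⟩, hv.1, fun i => ?_⟩, q.2⟩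
          have := hv.2 i
          omega
        · rw [if_neg hv, mul_zero, if_neg]
          rintro ⟨hh, _⟩
          refine hv ⟨(hc.1 hh).2.1, fun i => ?_⟩
          have := (hc.1 hh).2.2 i
          omega
      · rw [if_neg, if_neg]
        · rintro ⟨_, h⟩; rw [h2] at h; exact hS h
        · rintro ⟨_, h⟩; rw [h0, h2] at h; exact hS h
    · rw [if_neg, if_neg]
      · rintro ⟨h, _⟩; exact ha h
      · rintro ⟨h, _⟩; exact ha (hc.1 h).1
  rw [e]
  have hrow : ∀ a, HasSum (fun v => f (a, v)) (R a) := by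
    intro a
    simp only [f, R]
    split_ifs
    · exact (ih _).mul_left _
    · exact hasSum_zero
  have hf0 : 0 ≤ f := by
    intro p
    simp only [f, Pi.zero_apply]
    split_ifs
    · exact mul_nonneg (by positivity) (gK_nonneg _ _ _ _)
    · exact le_rfl
  have hsf : Summable f := by
    rw [summable_prod_of_nonneg hf0]
    refine ⟨fun n => (hrow n).summable, ?_⟩
    simp only [(hrow _).tsum_eq]
    exact hR.summable
  have := hsf.hasSum.prod_fiberwise hrow
  rw [hR.unique this]
  exact hsf.hasSum

lemma gK_hasSum {δ : ℕ} (hδ : δ ≤ 1) (K : List ℕ) (M : ℕ) :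
    HasSum (gK δ K (fun m => ∀ i, m i < 2 * M + 1)) (tn δ K M) := by
  classical
  induction K generalizing M with
  | nil =>
    have : gK δ [] (fun m => ∀ i, m i < 2 * M + 1) = fun _ => 1 := by
      funext m
      unfold gK
      rw [if_pos]
      · rfl
      · exact ⟨⟨fun i => i.elim0, fun i => i.elim0⟩, fun i => i.elim0⟩
    rw [this, tn]
    exact hasSum_unique (fun _ : Fin 0 → ℕ => (1:ℝ))
  | cons k K ih =>
    have h := hasSum_cons (δ := δ) (k := k) K (fun j => j < M) (tn δ (k :: K) M) ih ?_
    · have e : gK δ (k :: K) (fun m => ∀ i, m i < 2 * M + 1) =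
        gK δ (k :: K) (fun m => m ⟨0, by simp⟩ / 2 < M) := by
        funext m
        unfold gK
        congr 1
        apply propext
        refine and_congr_right fun hc => ?_
        obtain ⟨j, hj⟩ := hc.1 ⟨0, by simp⟩
        constructor
        · intro h
          have := h ⟨0, by simp⟩
          omega
        · intro h i
          by_cases hi : i = ⟨0, by simp⟩
          · rw [hi]; omega
          · have := hc.2 ⟨0, by simp⟩ i (Fin.lt_def.2 (Nat.pos_of_ne_zero fun h => hi (Fin.ext h)))
            obtain ⟨l, hl⟩ := hc.1 i
            omega
      rw [e]; exact h
    · rw [tn]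
      have : ∀ j ∉ Finset.range M, (if j < M then (((2 * j + 1 : ℕ) : ℝ) ^ k)⁻¹ * tn δ K (j + δ) else 0) = 0 :=
        fun j hj => if_neg (by simpa using hj)
      have h2 := hasSum_sum_of_ne_finset_zero (L := SummationFilter.unconditional ℕ) this
      rw [Finset.sum_congr rfl (fun j hj => if_pos (Finset.mem_range.1 hj))] at h2
      convert! h2

lemma gK_true {δ : ℕ} (hδ : δ ≤ 1) {k : ℕ} (hk : 2 ≤ k) (K : List ℕ) (hK : ∀ i ∈ K, 1 ≤ i) :
    HasSum (fun j : ℕ => (((2 * j + 1 : ℕ) : ℝ) ^ k)⁻¹ * tn δ K (j + δ)) (∑' m, gK δ (k :: K) (fun _ => True) m) := by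
  have hs := (term_summable hδ hk K hK).hasSum
  have h := hasSum_cons (δ := δ) (k := k) K (fun _ => True)
    (∑' j : ℕ, (((2 * j + 1 : ℕ) : ℝ) ^ k)⁻¹ * tn δ K (j + δ)) (gK_hasSum hδ K) (by simpa only [if_true] using hs)
  rw [h.tsum_eq]
  exact hs

lemma multT_hasSum {k : ℕ} (hk : 2 ≤ k) (K : List ℕ) (hK : ∀ i ∈ K, 1 ≤ i) :
    HasSum (fun j : ℕ => (((2 * j + 1 : ℕ) : ℝ) ^ k)⁻¹ * tn 0 K j) (multT (k :: K)) := by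
  have h := gK_true (δ := 0) (by norm_num) hk K hK
  have e : multT (k :: K) = ∑' m, gK 0 (k :: K) (fun _ => True) m := by
    unfold multT
    refine tsum_congr fun m => ?_
    unfold gK cond
    simp only [and_true, mul_zero, add_zero]
  rw [e]; exact h

lemma multTStar_hasSum {k : ℕ} (hk : 2 ≤ k) (K : List ℕ) (hK : ∀ i ∈ K, 1 ≤ i) :
    HasSum (fun j : ℕ => (((2 * j + 1 : ℕ) : ℝ) ^ k)⁻¹ * tn 1 K (j + 1)) (multTStar (k :: K)) := by
  classical
  have h := gK_true (δ := 1) (by norm_num) hk K hK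
  have e : multTStar (k :: K) = ∑' m, gK 1 (k :: K) (fun _ => True) m := by
    unfold multTStar
    refine tsum_congr fun m => ?_
    unfold gK
    have : ((∀ i, Odd (m i)) ∧ (∀ i j : Fin (k :: K).length, i < j → m j ≤ m i)) ↔ (cond 1 m ∧ True) := by
      unfold cond
      rw [and_true]
      refine and_congr_right fun ho => ?_
      refine forall_congr' fun i => forall_congr' fun j => imp_congr_right fun _ => ?_
      obtain ⟨a, ha⟩ := ho i
      obtain ⟨b, hb⟩ := ho j
      omega
    by_cases hc : cond 1 m ∧ True
    · rw [if_pos hc, if_pos (this.2 hc)]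
    · rw [if_neg hc, if_neg (fun h => hc (this.1 h))]
  rw [e]; exact h

end WSF

namespace WSF

def CC (p : ℕ) : Finset (List ℕ) := (Finset.univ : Finset (Composition p)).image Composition.blocks

lemma mem_CC {p : ℕ} {K : List ℕ} : K ∈ CC p ↔ (∀ i ∈ K, 1 ≤ i) ∧ K.sum = p := by
  unfold CC
  rw [Finset.mem_image]
  constructor
  · rintro ⟨c, _, rfl⟩
    exact ⟨fun i hi => c.one_le_blocks hi, c.blocks_sum⟩
  · rintro ⟨h1, h2⟩
    exact ⟨⟨K, fun {i} hi => h1 i hi, h2⟩, Finset.mem_univ _, rfl⟩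

lemma CC_zero : CC 0 = {[]} := by
  ext K
  rw [mem_CC, Finset.mem_singleton]
  constructor
  · rintro ⟨h1, h2⟩
    cases K with
    | nil => rfl
    | cons a K =>
      have := h1 a List.mem_cons_self
      rw [List.sum_cons] at h2
      omega
  · rintro rfl; simp

lemma length_le_sum (K : List ℕ) (h : ∀ i ∈ K, 1 ≤ i) : K.length ≤ K.sum := by
  induction K with
  | nil => simp
  | cons a K ih =>
    have h1 := h a List.mem_cons_self
    have h2 := ih fun i hi => h i (List.mem_cons_of_mem _ hi)
    rw [List.sum_cons, List.length_cons]
    omega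

lemma CC_sum_succ (p : ℕ) (f : List ℕ → ℝ) :
    ∑ K ∈ CC (p + 1), f K = ∑ q ∈ Finset.HasAntidiagonal.antidiagonal p, ∑ K ∈ CC q.2, f ((q.1 + 1) :: K) := by
  rw [Finset.sum_sigma']
  symm
  refine Finset.sum_bij' (fun s _ => (s.1.1 + 1) :: s.2)
    (fun L _ => ⟨(L.headI - 1, L.tail.sum), L.tail⟩) ?_ ?_ ?_ ?_ ?_
  · rintro ⟨⟨a, b⟩, K⟩ h
    simp only [Finset.mem_sigma, Finset.HasAntidiagonal.mem_antidiagonal, mem_CC] at h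
    rw [mem_CC]
    refine ⟨?_, ?_⟩
    · intro i hi
      rcases List.mem_cons.1 hi with rfl | hi
      · omega
      · exact h.2.1 i hi
    · obtain ⟨h1, h2, h3⟩ := h
      change a + 1 + K.sum = p + 1
      omega
  · intro L hL
    rw [mem_CC] at hL
    cases L with
    | nil => simp at hL
    | cons a L =>
      have h1 := hL.1 a List.mem_cons_self
      have h2 := hL.2
      rw [List.sum_cons] at h2
      simp only [Finset.mem_sigma, Finset.HasAntidiagonal.mem_antidiagonal, mem_CC, List.headI, List.tail]
      exact ⟨by change a - 1 + L.sum = p; omega, fun i hi => hL.1 i (List.mem_cons_of_mem _ hi), trivial⟩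
  · rintro ⟨⟨a, b⟩, K⟩ h
    simp only [Finset.mem_sigma, Finset.HasAntidiagonal.mem_antidiagonal, mem_CC] at h
    obtain ⟨h1, h2, rfl⟩ := h
    simp
  · intro L hL
    rw [mem_CC] at hL
    cases L with
    | nil => simp at hL
    | cons a L =>
      have h1 := hL.1 a List.mem_cons_self
      simp only [List.headI, List.tail]
      congr 1
      omega
  · intros; rfl

/-- sum over admissible indices -/
lemma adm_sum (p : ℕ) (w : ℕ → ℝ) (T : List ℕ → ℝ) :
    ∑ n ∈ Finset.range (p + 1), w n *
      (∑' K : List ℕ, if Admissible K ∧ K.sum = p + 2 ∧ K.length = n + 1 then T K else 0)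
    = ∑ q ∈ Finset.HasAntidiagonal.antidiagonal p, ∑ K ∈ CC q.2, w K.length * T ((q.1 + 2) :: K) := by
  have h1 : ∀ n, (∑' K : List ℕ, if Admissible K ∧ K.sum = p + 2 ∧ K.length = n + 1 then T K else 0)
      = ∑ K ∈ CC (p + 1 + 1), if Admissible K ∧ K.sum = p + 2 ∧ K.length = n + 1 then T K else 0 := by
    intro n
    refine tsum_eq_sum fun K hK => if_neg ?_
    rintro ⟨ha, hs, _⟩
    exact hK (mem_CC.2 ⟨ha.1, hs⟩)
  have h2 : ∀ n, (∑' K : List ℕ, if Admissible K ∧ K.sum = p + 2 ∧ K.length = n + 1 then T K else 0)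
      = ∑ q ∈ Finset.HasAntidiagonal.antidiagonal p, ∑ K ∈ CC q.2, if Admissible ((q.1 + 1 + 1) :: K) ∧
        ((q.1 + 1 + 1) :: K).sum = p + 2 ∧ ((q.1 + 1 + 1) :: K).length = n + 1 then T ((q.1 + 1 + 1) :: K) else 0 := by
    intro n
    rw [h1, CC_sum_succ, Finset.Nat.sum_antidiagonal_succ, add_eq_right]
    refine Finset.sum_eq_zero fun K _ => if_neg ?_
    rintro ⟨ha, _⟩
    have := ha.2
    simp [List.headI] at this
  simp only [h2, Finset.mul_sum]
  rw [Finset.sum_comm]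
  refine Finset.sum_congr rfl fun q hq => ?_
  rw [Finset.sum_comm]
  refine Finset.sum_congr rfl fun K hK => ?_
  rw [Finset.HasAntidiagonal.mem_antidiagonal] at hq
  rw [mem_CC] at hK
  have hl := length_le_sum K hK.1
  rw [Finset.sum_eq_single K.length]
  · rw [if_pos]
    refine ⟨⟨?_, ?_⟩, ?_, ?_⟩
    · intro i hi
      rcases List.mem_cons.1 hi with rfl | hi
      · omega
      · exact hK.1 i hi
    · simp [List.headI]
    · rw [List.sum_cons]; omega
    · simp
  · intro n _ hn
    rw [if_neg, mul_zero]
    rintro ⟨_, _, h⟩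
    rw [List.length_cons] at h
    omega
  · intro h
    exact absurd (Finset.mem_range.2 (by omega)) h

noncomputable def cj (j : ℕ) : ℝ := (((2 * j + 1 : ℕ) : ℝ))⁻¹

noncomputable def BB (δ : ℕ) (w : ℝ) (M p : ℕ) : ℝ := ∑ K ∈ CC p, w ^ K.length * tn δ K M

noncomputable def EE (δ : ℕ) (w : ℝ) (j p : ℕ) : ℝ :=
  ∑ q ∈ Finset.HasAntidiagonal.antidiagonal p, cj j ^ (q.1 + 1) * BB δ w (j + δ) q.2

lemma BB_zero (δ : ℕ) (w : ℝ) (M : ℕ) : BB δ w M 0 = 1 := by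
  simp [BB, CC_zero, tn]

lemma BB_succ (δ : ℕ) (w : ℝ) (M p : ℕ) : BB δ w M (p+1) = ∑ j ∈ Finset.range M, w * EE δ w j p := by
  unfold BB EE BB
  rw [CC_sum_succ]
  simp only [tn, Finset.mul_sum, List.length_cons]
  symm
  rw [Finset.sum_comm]
  refine Finset.sum_congr rfl fun q _ => ?_
  rw [Finset.sum_comm]
  refine Finset.sum_congr rfl fun K _ => Finset.sum_congr rfl fun j _ => ?_
  rw [cj, inv_pow]
  ring

lemma EE_zero (δ : ℕ) (w : ℝ) (j : ℕ) : EE δ w j 0 = cj j := by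
  simp [EE, BB_zero]

lemma EE_succ (δ : ℕ) (w : ℝ) (j p : ℕ) : EE δ w j (p+1) = cj j * (BB δ w (j + δ) (p+1) + EE δ w j p) := by
  unfold EE
  rw [Finset.Nat.sum_antidiagonal_succ, mul_add, Finset.mul_sum]
  congr 1
  · simp
  · refine Finset.sum_congr rfl fun q _ => ?_
    ring

lemma BB_step (δ : ℕ) (w : ℝ) (M p : ℕ) : BB δ w (M+1) (p+1) = BB δ w M (p+1) + w * EE δ w M p := by
  rw [BB_succ, BB_succ, Finset.sum_range_succ]

lemma BB_zero_left (δ : ℕ) (w : ℝ) (p : ℕ) : BB δ w 0 (p+1) = 0 := by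
  rw [BB_succ]; simp

lemma EE_two (M p : ℕ) : EE 0 2 M p = cj M * (BB 0 2 M p + BB 0 2 (M+1) p) / 2 := by
  cases p with
  | zero => rw [EE_zero, BB_zero, BB_zero]; ring
  | succ p => rw [EE_succ, BB_step, add_zero]; ring

lemma EE_star (M p : ℕ) : EE 1 (-2) M p = cj M * (BB 1 (-2) M p + BB 1 (-2) (M+1) p) / 2 := by
  cases p with
  | zero => rw [EE_zero, BB_zero, BB_zero]; ring
  | succ p => rw [EE_succ, BB_step]; ring

lemma BB_star (M p : ℕ) : BB 1 (-2) M p = (-1) ^ p * BB 0 2 M p := by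
  induction p generalizing M with
  | zero => simp [BB_zero]
  | succ p ihp =>
    induction M with
    | zero => simp [BB_zero_left]
    | succ M ihM =>
      rw [BB_step, BB_step, ihM, EE_star, EE_two, ihp, ihp]
      ring

lemma EE_eq (M p : ℕ) : EE 1 (-2) M p = (-1) ^ p * EE 0 2 M p := by
  rw [EE_star, EE_two, BB_star, BB_star]; ring

end WSF

namespace WSF

noncomputable def LL (k : ℕ) : ℝ := ∑ n ∈ Finset.range (k - 1), (2 : ℝ) ^ n * G0d k (n + 1)

lemma LL_hasSum (p : ℕ) : HasSum (fun j => cj j * EE 0 2 j p) (LL (p + 2)) := by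
  have e : LL (p + 2) = ∑ q ∈ Finset.HasAntidiagonal.antidiagonal p, ∑ K ∈ CC q.2, (2:ℝ) ^ K.length * multT ((q.1 + 2) :: K) :=
    adm_sum p (fun n => (2:ℝ) ^ n) multT
  rw [e]
  have h : HasSum (fun j => ∑ q ∈ Finset.HasAntidiagonal.antidiagonal p, ∑ K ∈ CC q.2,
      (2:ℝ) ^ K.length * ((((2 * j + 1 : ℕ) : ℝ) ^ (q.1 + 2))⁻¹ * tn 0 K j))
      (∑ q ∈ Finset.HasAntidiagonal.antidiagonal p, ∑ K ∈ CC q.2, (2:ℝ) ^ K.length * multT ((q.1 + 2) :: K)) :=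
    hasSum_sum fun q _ => hasSum_sum fun K hK =>
      (multT_hasSum (by omega) K (mem_CC.1 hK).1).mul_left _
  have e2 : (fun j => cj j * EE 0 2 j p) = (fun j => ∑ q ∈ Finset.HasAntidiagonal.antidiagonal p, ∑ K ∈ CC q.2,
      (2:ℝ) ^ K.length * ((((2 * j + 1 : ℕ) : ℝ) ^ (q.1 + 2))⁻¹ * tn 0 K j)) := by
    funext j
    unfold EE BB
    simp only [Finset.mul_sum]
    refine Finset.sum_congr rfl fun q _ => Finset.sum_congr rfl fun K _ => ?_
    rw [cj, add_zero, ← inv_pow]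
    ring
  rw [e2]
  exact h

lemma star_hasSum (p : ℕ) : HasSum (fun j => cj j * EE 0 2 j p)
    (∑ n ∈ Finset.range (p + 1), (-1 : ℝ) ^ (p + 2 - n - 2) * 2 ^ n * G0dStar (p + 2) (n + 1)) := by
  have e : (∑ n ∈ Finset.range (p + 1), (-1 : ℝ) ^ (p + 2 - n - 2) * 2 ^ n * G0dStar (p + 2) (n + 1))
     = ∑ q ∈ Finset.HasAntidiagonal.antidiagonal p, ∑ K ∈ CC q.2,
      ((-1:ℝ) ^ (p + 2 - K.length - 2) * (2:ℝ) ^ K.length) * multTStar ((q.1 + 2) :: K) :=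
    adm_sum p (fun n => (-1 : ℝ) ^ (p + 2 - n - 2) * (2:ℝ) ^ n) multTStar
  rw [e]
  have h : HasSum (fun j => ∑ q ∈ Finset.HasAntidiagonal.antidiagonal p, ∑ K ∈ CC q.2,
      ((-1:ℝ) ^ (p + 2 - K.length - 2) * (2:ℝ) ^ K.length) * ((((2 * j + 1 : ℕ) : ℝ) ^ (q.1 + 2))⁻¹ * tn 1 K (j + 1)))
      (∑ q ∈ Finset.HasAntidiagonal.antidiagonal p, ∑ K ∈ CC q.2,
      ((-1:ℝ) ^ (p + 2 - K.length - 2) * (2:ℝ) ^ K.length) * multTStar ((q.1 + 2) :: K)) :=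
    hasSum_sum fun q _ => hasSum_sum fun K hK =>
      (multTStar_hasSum (by omega) K (mem_CC.1 hK).1).mul_left _
  have e2 : (fun j => cj j * EE 0 2 j p) = (fun j => ∑ q ∈ Finset.HasAntidiagonal.antidiagonal p, ∑ K ∈ CC q.2,
      ((-1:ℝ) ^ (p + 2 - K.length - 2) * (2:ℝ) ^ K.length) * ((((2 * j + 1 : ℕ) : ℝ) ^ (q.1 + 2))⁻¹ * tn 1 K (j + 1))) := by
    funext j
    have : EE 0 2 j p = (-1) ^ p * EE 1 (-2) j p := by
      rw [EE_eq, ← mul_assoc, ← mul_pow]; norm_num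
    rw [this]
    unfold EE BB
    simp only [Finset.mul_sum]
    refine Finset.sum_congr rfl fun q hq => Finset.sum_congr rfl fun K hK => ?_
    rw [Finset.HasAntidiagonal.mem_antidiagonal] at hq
    rw [mem_CC] at hK
    have hl := length_le_sum K hK.1
    obtain ⟨d, hd⟩ : ∃ d, p = d + K.length := ⟨p - K.length, by omega⟩
    have h1 : p + 2 - K.length - 2 = d := by omega
    rw [h1, hd, cj, ← inv_pow, pow_add, neg_pow (2:ℝ)]
    have h2 : ((-1:ℝ) ^ K.length) * (-1) ^ K.length = 1 := by rw [← mul_pow]; norm_num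
    linear_combination ((-1:ℝ) ^ d * 2 ^ K.length * ((((2 * j + 1 : ℕ) : ℝ))⁻¹ ^ (q.1 + 2) * tn 1 K (j + 1))) * h2
  rw [e2]
  exact h

lemma star_eq (p : ℕ) : LL (p + 2) =
    ∑ n ∈ Finset.range (p + 1), (-1 : ℝ) ^ (p + 2 - n - 2) * 2 ^ n * G0dStar (p + 2) (n + 1) :=
  (LL_hasSum p).unique (star_hasSum p)

lemma BB_nonneg (M p : ℕ) : 0 ≤ BB 0 2 M p :=
  Finset.sum_nonneg fun K _ => mul_nonneg (by positivity) (tn_nonneg _ _ _)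

lemma EE_nonneg (M p : ℕ) : 0 ≤ EE 0 2 M p :=
  Finset.sum_nonneg fun K _ => mul_nonneg (by unfold cj; positivity) (BB_nonneg _ _)

lemma gen_step {f g : ℕ → ℝ} {r s : ℝ} (hf : ∀ p, 0 ≤ f p) (hg : ∀ p, 0 ≤ g p) (hr0 : 0 ≤ r) (hr1 : r < 1)
    (h0 : g 0 = f 0) (hs : ∀ p, g (p+1) = f (p+1) + r * (f p + g p)) (hF : HasSum f s) :
    HasSum g (s * (1 + r) / (1 - r)) := by
  have hr : 0 < 1 - r := by linarith
  have part : ∀ N, ∑ p ∈ Finset.range (N+1), g p = ∑ p ∈ Finset.range (N+1), f p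
      + r * (∑ p ∈ Finset.range N, f p + ∑ p ∈ Finset.range N, g p) := by
    intro N
    induction N with
    | zero => simp [h0]
    | succ N ih =>
      have k1 := Finset.sum_range_succ g (N+1)
      have k2 := Finset.sum_range_succ f (N+1)
      have k3 := Finset.sum_range_succ g N
      have k4 := Finset.sum_range_succ f N
      have k5 := hs N
      linear_combination k1 - k2 + ih + k5 - r * k3 - r * k4
  have hle : ∀ N, ∑ p ∈ Finset.range N, f p ≤ s := fun N => sum_le_hasSum _ (fun i _ => hf i) hF
  have hbd : ∀ N, ∑ p ∈ Finset.range N, g p ≤ s * (1 + r) / (1 - r) := by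
    intro N
    rw [le_div_iff₀ hr]
    have h1 := part N
    have h2 := hg N
    have h3 := Finset.sum_range_succ g N
    have h4 := hle N
    have h5 := hle (N+1)
    nlinarith
  have hsum : Summable g := summable_of_sum_range_le hg hbd
  have h1 : HasSum (fun p => g (p+1)) (∑' p, g p - g 0) := by
    have := (hasSum_nat_add_iff' 1).2 hsum.hasSum
    simpa using this
  have h2 : HasSum (fun p => f (p+1)) (s - f 0) := by
    have := (hasSum_nat_add_iff' 1).2 hF
    simpa using this
  have h3 := h2.add ((hF.add hsum.hasSum).mul_left r)
  simp only [← hs] at h3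
  have h4 := h1.unique h3
  have h5 : ∑' p, g p = s * (1 + r) / (1 - r) := by
    rw [eq_div_iff hr.ne']
    rw [h0] at h4
    linarith
  rw [← h5]
  exact hsum.hasSum

lemma BB_gen {x : ℝ} (h0 : 0 ≤ x) (h1 : x ≤ 1/4) (M : ℕ) :
    HasSum (fun p => BB 0 2 M p * x ^ p) (∏ i ∈ Finset.range M, (1 + cj i * x) / (1 - cj i * x)) := by
  induction M with
  | zero =>
    have := hasSum_single (f := fun p => BB 0 2 0 p * x ^ p) 0 (fun p hp => by
      obtain ⟨q, rfl⟩ := Nat.exists_eq_succ_of_ne_zero hp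
      simp only [Nat.succ_eq_add_one]
      rw [BB_zero_left, zero_mul])
    simpa [BB_zero] using this
  | succ M ih =>
    have hc : 0 ≤ cj M := by unfold cj; positivity
    have hc1 : cj M ≤ 1 := by
      unfold cj
      apply inv_le_one_of_one_le₀
      push_cast
      have : (0:ℝ) ≤ M := M.cast_nonneg
      linarith
    rw [Finset.prod_range_succ, ← mul_div_assoc]
    refine gen_step (fun p => mul_nonneg (BB_nonneg _ _) (by positivity))
      (fun p => mul_nonneg (BB_nonneg _ _) (by positivity)) (by positivity) (by nlinarith) ?_ ?_ ih
    · simp [BB_zero]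
    · intro p
      rw [BB_step, EE_two]
      ring

lemma u_eq {x : ℝ} (h0 : 0 ≤ x) (h1 : x ≤ 1/4) (j : ℕ) :
    u x 0 j = (1 - x) * (cj j ^ 2 * (∏ i ∈ Finset.range j, (1 + cj i * x) / (1 - cj i * x)) / (1 - cj j * x)) := by
  induction j with
  | zero =>
    have : (1 - x) ≠ 0 := by linarith
    simp [u, cj]
    field_simp
  | succ j ih =>
    rw [u, Finset.prod_range_succ]
    change u x 0 j * r x 0 j = _
    rw [ih, r_zero h1, Finset.prod_range_succ]
    have hj : (0:ℝ) ≤ j := j.cast_nonneg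
    unfold cj
    push_cast
    generalize (∏ i ∈ Finset.range j, (1 + (2 * (i:ℝ) + 1)⁻¹ * x) / (1 - (2 * (i:ℝ) + 1)⁻¹ * x)) = W
    have a1 : 2 * (j:ℝ) + 1 ≠ 0 := by positivity
    have a2 : 2 * (j:ℝ) + 3 ≠ 0 := by positivity
    have a3 : 2 * (j:ℝ) + 3 - x ≠ 0 := by linarith
    have a4 : 2 * (j:ℝ) + 1 - x ≠ 0 := by linarith
    have e1 : 1 - (2 * (j:ℝ) + 1)⁻¹ * x = (2 * (j:ℝ) + 1 - x) / (2 * j + 1) := by field_simp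
    have e2 : 1 - (2 * ((j:ℝ) + 1) + 1)⁻¹ * x = (2 * (j:ℝ) + 3 - x) / (2 * j + 3) := by
      rw [show 2 * ((j:ℝ) + 1) + 1 = 2 * j + 3 by ring]; field_simp
    have e3 : 1 + (2 * (j:ℝ) + 1)⁻¹ * x = (2 * (j:ℝ) + 1 + x) / (2 * j + 1) := by field_simp
    rw [e1, e2, e3, show 2 * ((j:ℝ) + 1) + 1 = 2 * j + 3 by ring]
    field_simp

lemma EE_gen {x : ℝ} (h0 : 0 ≤ x) (h1 : x ≤ 1/4) (j : ℕ) :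
    HasSum (fun p => cj j * EE 0 2 j p * x ^ p) (u x 0 j / (1 - x)) := by
  have h := ((BB_gen h0 h1 j).add (BB_gen h0 h1 (j+1))).mul_left (cj j ^ 2 / 2)
  have e : (fun p => cj j * EE 0 2 j p * x ^ p) =
      fun p => cj j ^ 2 / 2 * (BB 0 2 j p * x ^ p + BB 0 2 (j+1) p * x ^ p) := by
    funext p
    rw [EE_two]; ring
  rw [e]
  have hc : 0 ≤ cj j := by unfold cj; positivity
  have hc1 : cj j ≤ 1 := by
    unfold cj
    apply inv_le_one_of_one_le₀
    push_cast
    have : (0:ℝ) ≤ j := j.cast_nonneg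
    linarith
  have a1 : 1 - cj j * x ≠ 0 := by nlinarith
  have a2 : 1 - x ≠ 0 := by linarith
  have e2 : u x 0 j / (1 - x) = cj j ^ 2 / 2 * (∏ i ∈ Finset.range j, (1 + cj i * x) / (1 - cj i * x) +
      ∏ i ∈ Finset.range (j+1), (1 + cj i * x) / (1 - cj i * x)) := by
    rw [u_eq h0 h1, Finset.prod_range_succ]
    generalize (∏ i ∈ Finset.range j, (1 + cj i * x) / (1 - cj i * x)) = W
    generalize hy : 1 - cj j * x = y at a1 ⊢
    rw [show 1 + cj j * x = 2 - y by linarith]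
    field_simp
    ring
  rw [e2]
  exact h

lemma tval_two : ∑' n, u 0 0 n = tval 2 := by
  unfold tval
  refine tsum_congr fun n => ?_
  rw [u_eq le_rfl (by norm_num)]
  simp [cj]

lemma LL_gen {x : ℝ} (h0 : 0 ≤ x) (h1 : x ≤ 1/4) :
    HasSum (fun p => LL (p + 2) * x ^ p)
      (tval 2 * Real.exp (∑' n : ℕ, x ^ (n+1) / (n+1) * eta (n+1)) ^ 2) := by
  have hx : 1 - x ≠ 0 := by linarith
  have hu : HasSum (fun j => u x 0 j / (1 - x))
      (tval 2 * Real.exp (∑' n : ℕ, x ^ (n+1) / (n+1) * eta (n+1)) ^ 2) := by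
    have h := (u_summable h0 h1 0).hasSum.div_const (1 - x)
    rw [S_eval h0 h1 (ef_tendsto h0 h1), tval_two] at h
    convert! h using 1
    field_simp
  let f : ℕ × ℕ → ℝ := fun q => cj q.1 * EE 0 2 q.1 q.2 * x ^ q.2
  have hf0 : 0 ≤ f := fun q => mul_nonneg (mul_nonneg (by unfold cj; positivity) (EE_nonneg _ _)) (by positivity)
  have hrow : ∀ j, HasSum (fun p => f (j, p)) (u x 0 j / (1 - x)) := fun j => EE_gen h0 h1 j
  have hsf : Summable f := by
    rw [summable_prod_of_nonneg hf0]
    refine ⟨fun n => (hrow n).summable, ?_⟩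
    simp only [(hrow _).tsum_eq]
    exact hu.summable
  have htot : HasSum f (tval 2 * Real.exp (∑' n : ℕ, x ^ (n+1) / (n+1) * eta (n+1)) ^ 2) := by
    have := hsf.hasSum.prod_fiberwise hrow
    rw [hu.unique this]
    exact hsf.hasSum
  have hsw : HasSum (fun p : ℕ × ℕ => f p.swap) (tval 2 * Real.exp (∑' n : ℕ, x ^ (n+1) / (n+1) * eta (n+1)) ^ 2) :=
    (Equiv.prodComm ℕ ℕ).hasSum_iff.2 htot
  exact hsw.prod_fiberwise (fun p => (LL_hasSum p).mul_right (x ^ p))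

lemma LL_eq_RHS (p : ℕ) : LL (p + 2) = RHS (p + 2) := by
  have := unique_coeff (d := fun p => LL (p + 2) - RHS (p + 2)) (fun x h0 h1 => by
    have := (LL_gen h0 h1).sub (RHS_hasSum h0 h1)
    simpa only [sub_self, ← sub_mul] using this) p
  exact sub_eq_zero.1 this

end WSF


/-- Weighted sum formula (Corollary 2.6): for every `k ≥ 2`,
`∑_{n=1}^{k-1} 2^{n-1} G₀(k,n) = ∑_{n=1}^{k-1} (-1)^{k-n-1} 2^{n-1} G₀*(k,n)` and both equal
the explicit sum over `n, m ≥ 0` and `n₁, …, n_m ≥ 2` with `n + n₁ + ⋯ + n_m = k - 2`. -/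
theorem weighted_sum_formula (k : ℕ) (hk : 2 ≤ k) :
    (∑ n ∈ Finset.range (k - 1), (2 : ℝ) ^ n * G0d k (n + 1))
      = (∑ n ∈ Finset.range (k - 1),
          (-1 : ℝ) ^ (k - n - 2) * 2 ^ n * G0dStar k (n + 1)) ∧
    (∑ n ∈ Finset.range (k - 1), (2 : ℝ) ^ n * G0d k (n + 1))
      = ∑' p : ℕ × List ℕ,
          if (∀ i ∈ p.2, 2 ≤ i) ∧ p.1 + p.2.sum + 2 = k then
            (2 : ℝ) ^ (p.1 + 2 * p.2.length) /
                ((p.1.factorial : ℝ) * (p.2.length.factorial : ℝ)) *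
              tval 2 * (Real.log 2) ^ p.1 *
              (p.2.map fun i =>
                ((2 : ℝ) ^ (i - 1) - 1) * tval i / ((i : ℝ) * ((2 : ℝ) ^ i - 1))).prod
          else 0 := by
  obtain ⟨p, rfl⟩ : ∃ p, k = p + 2 := ⟨k - 2, by omega⟩
  exact ⟨WSF.star_eq p, WSF.LL_eq_RHS p⟩
end

section
/- There exists δ > 0 such that for all real u, v with |u|, |v| < δ, ∑_{k > n ≥ 1} G_0(k,n) u^{k−n−1} v^{n−1} = (1/(1−u)) · ₃F₂((1−u+v)/2, 1/2, 1; (3−u)/2, 3/2; 1), the series converging absolutely. -/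
open scoped BigOperators

noncomputable def hhAux : List ℕ → ℕ → ℝ
  | [], _ => 1
  | k :: L, b => ∑ x ∈ Finset.range b, if Odd x then ((x : ℝ) ^ k)⁻¹ * hhAux L x else 0

theorem hhAux_nonneg (L : List ℕ) : ∀ b, 0 ≤ hhAux L b := by
  induction L with
  | nil => intro b; simp [hhAux]
  | cons k L ih =>
    intro b
    rw [hhAux]
    refine Finset.sum_nonneg fun x _ => ?_
    split_ifs
    · exact mul_nonneg (by positivity) (ih x)
    · exact le_rfl

theorem hasSum_conv_aux {α : Type*} {f g : α → ℝ} {a b : ℝ} (h : HasSum g b)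
    (hf : ∀ x, f x = g x) (hab : a = b) : HasSum f a := by
  have : f = g := funext hf
  subst this; subst hab; exact h

theorem hasSum_prod_nonneg_aux {α β : Type*} {f : α × β → ℝ} {g : α → ℝ} {s : ℝ}
    (hf : ∀ p, 0 ≤ f p) (h : ∀ a, HasSum (fun b => f (a, b)) (g a)) (hg : HasSum g s) :
    HasSum f s := by
  have hs : Summable f := by
    rw [summable_prod_of_nonneg hf]
    refine ⟨fun a => (h a).summable, ?_⟩
    have : (fun a => ∑' b, f (a, b)) = g := funext fun a => (h a).tsum_eq
    rw [this]; exact hg.summable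
  have := hs.hasSum.prod_fiberwise h
  rw [← this.unique hg]; exact hs.hasSum

/-- bounded term -/
noncomputable def TAux (L : List ℕ) (b : ℕ) (m : Fin L.length → ℕ) : ℝ :=
  if (∀ i, Odd (m i)) ∧ (∀ i, m i < b) ∧ (∀ i j : Fin L.length, i < j → m j < m i) then
      ∏ i, ((m i : ℝ) ^ L.get i)⁻¹
    else 0

theorem TAux_nonneg (L b m) : 0 ≤ TAux L b m := by
  unfold TAux; split_ifs
  · exact Finset.prod_nonneg fun i _ => by positivity
  · exact le_rfl

theorem top_cons (k : ℕ) (L : List ℕ) (x : ℕ) (m : Fin L.length → ℕ) :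
    (if (∀ i : Fin (L.length + 1), Odd ((Fin.cons x m : Fin (L.length+1) → ℕ) i)) ∧
      (∀ i j : Fin (L.length + 1), i < j → (Fin.cons x m : Fin (L.length+1) → ℕ) j
        < (Fin.cons x m : Fin (L.length+1) → ℕ) i) then
      ∏ i : Fin (L.length + 1),
        ((((Fin.cons x m : Fin (L.length+1) → ℕ) i : ℕ) : ℝ) ^ (k :: L).get i)⁻¹ else 0)
    = if Odd x then ((x : ℝ) ^ k)⁻¹ * TAux L x m else 0 := by
  unfold TAux
  rw [Fin.prod_univ_succ]
  simp only [Fin.forall_fin_succ, Fin.cons_zero, Fin.cons_succ]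
  simp only [Fin.succ_lt_succ_iff, Fin.succ_pos, Fin.not_lt_zero, lt_irrefl, 
    forall_true_left, false_imp_iff, true_and, List.get_cons_zero, List.get_cons_succ]
  by_cases h1 : Odd x
  · by_cases h2 : ∀ i, Odd (m i)
    · simp only [h1, h2]; simp
    · simp [h1, h2]
  · simp [h1]

theorem bdd_cons (k : ℕ) (L : List ℕ) (b x : ℕ) (m : Fin L.length → ℕ) :
    TAux (k :: L) b (Fin.cons x m : Fin (L.length+1) → ℕ)
    = if x < b then (if Odd x then ((x : ℝ) ^ k)⁻¹ * TAux L x m else 0) else 0 := by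
  rw [← top_cons]
  unfold TAux
  change (if (∀ i : Fin (L.length + 1), _) ∧ (∀ i : Fin (L.length + 1), _) ∧
    (∀ i j : Fin (L.length + 1), _) then ∏ i : Fin (L.length + 1), _ else _) = _
  rw [← ite_and]
  refine if_congr ?_ rfl rfl
  constructor
  · rintro ⟨h1, h2, h3⟩
    exact ⟨by simpa using h2 0, h1, h3⟩
  · rintro ⟨h1, h2, h3⟩
    refine ⟨h2, fun i => ?_, h3⟩
    rcases Fin.eq_zero_or_eq_succ i with rfl | ⟨j, rfl⟩
    · simpa using h1
    · exact (h3 0 j.succ (Fin.succ_pos j)).trans (by simpa using h1)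

theorem hasSum_TAux (L : List ℕ) : ∀ b, HasSum (TAux L b) (hhAux L b) := by
  induction L with
  | nil =>
    intro b
    have : HasSum (fun m : Fin 0 → ℕ => TAux [] b m) (∑ m : Fin 0 → ℕ, TAux [] b m) :=
      hasSum_fintype _
    refine hasSum_conv_aux this (fun _ => rfl) ?_
    simp [hhAux, TAux]
  | cons k L ih =>
    intro b
    refine (Fin.consEquiv (fun _ : Fin (L.length + 1) => ℕ)).hasSum_iff.mp ?_
    refine hasSum_prod_nonneg_aux (g := fun x => if x < b then
      (if Odd x then ((x : ℝ) ^ k)⁻¹ * hhAux L x else 0) else 0)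
      (fun p => TAux_nonneg _ _ _) ?_ ?_
    · intro x
      have : (fun m => (TAux (k :: L) b ∘ (Fin.consEquiv (fun _ : Fin (L.length + 1) => ℕ))) (x, m))
        = fun m => if x < b then (if Odd x then ((x : ℝ) ^ k)⁻¹ * TAux L x m else 0) else 0 := by
        funext m
        exact bdd_cons k L b x m
      rw [this]
      split_ifs
      · exact (ih x).mul_left _
      · exact hasSum_zero
      · exact hasSum_zero
    · have := hasSum_sum_of_ne_finset_zero (L := SummationFilter.unconditional ℕ) (f := fun x => if x < b then
        (if Odd x then ((x : ℝ) ^ k)⁻¹ * hhAux L x else 0) else 0) (s := Finset.range b) (by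
          intro x hx
          rw [Finset.mem_range] at hx
          simp [hx])
      convert this using 1
      rw [hhAux]
      refine Finset.sum_congr rfl fun x hx => ?_
      rw [Finset.mem_range] at hx
      simp [hx]

theorem multT_cons (k : ℕ) (L : List ℕ)
    (hs : Summable fun N : ℕ => (((2 * N + 1 : ℕ) : ℝ) ^ k)⁻¹ * hhAux L (2 * N + 1)) :
    HasSum (fun N : ℕ => (((2 * N + 1 : ℕ) : ℝ) ^ k)⁻¹ * hhAux L (2 * N + 1))
      (multT (k :: L)) := by
  have hinj : Function.Injective (fun N : ℕ => 2 * N + 1) := by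
    intro a b h; simpa using h
  have h1 : HasSum (fun x : ℕ => if Odd x then ((x : ℝ) ^ k)⁻¹ * hhAux L x else 0)
      (∑' N : ℕ, (((2 * N + 1 : ℕ) : ℝ) ^ k)⁻¹ * hhAux L (2 * N + 1)) := by
    rw [← hinj.hasSum_iff]
    · convert hs.hasSum using 2 with N
      simp
    · intro x hx
      rw [if_neg]
      rintro ⟨j, rfl⟩
      exact hx ⟨j, rfl⟩
  have h2 : HasSum (fun p : ℕ × (Fin L.length → ℕ) =>
      if Odd p.1 then ((p.1 : ℝ) ^ k)⁻¹ * TAux L p.1 p.2 else 0)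
      (∑' N : ℕ, (((2 * N + 1 : ℕ) : ℝ) ^ k)⁻¹ * hhAux L (2 * N + 1)) := by
    refine hasSum_prod_nonneg_aux ?_ ?_ h1
    · intro p
      split_ifs
      · exact mul_nonneg (by positivity) (TAux_nonneg _ _ _)
      · exact le_rfl
    · intro x
      dsimp only
      split_ifs
      · exact (hasSum_TAux L x).mul_left _
      · exact hasSum_zero
  have h3 : multT (k :: L) =
      ∑' N : ℕ, (((2 * N + 1 : ℕ) : ℝ) ^ k)⁻¹ * hhAux L (2 * N + 1) := by
    rw [← h2.tsum_eq]
    unfold multT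
    refine ((Fin.consEquiv (fun _ : Fin (L.length + 1) => ℕ)).tsum_eq _).symm.trans ?_
    refine tsum_congr fun p => ?_
    exact top_cons k L p.1 p.2
  rw [h3]; exact hs.hasSum

theorem geom_aux (x u : ℝ) (hx : 1 ≤ x) (hu : |u| < 1) :
    HasSum (fun k : ℕ => (x ^ (k + 1))⁻¹ * u ^ k) (1 / (x - u)) := by
  have hx0 : 0 < x := by linarith
  have h : |u / x| < 1 := by
    rw [abs_div, abs_of_pos hx0, div_lt_one hx0]; linarith
  have hne : x - u ≠ 0 := by
    have := (abs_lt.mp hu).2; intro h; linarith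
  have := (hasSum_geometric_of_abs_lt_one h).mul_left x⁻¹
  refine hasSum_conv_aux this ?_ ?_
  · intro k; rw [div_pow, pow_succ]; field_simp
  · have : 1 - u / x ≠ 0 := by
      intro h; apply hne; field_simp at h; simpa using h
    field_simp

theorem P_aux (u v : ℝ) (hu : |u| < 1) (N : ℕ) :
    HasSum (fun L : List ℕ => hhAux (L.map Nat.succ) (2 * N + 1) * u ^ L.sum * v ^ L.length)
      (∏ j ∈ Finset.range N, (1 + v / (2 * (j : ℝ) + 1 - u))) := by
  induction N with
  | zero =>
    have := hasSum_single (f := fun L : List ℕ =>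
      hhAux (L.map Nat.succ) (2 * 0 + 1) * u ^ L.sum * v ^ L.length) [] (by
        intro L hL
        cases L with
        | nil => exact absurd rfl hL
        | cons k L => simp [hhAux])
    convert this using 1
    simp [hhAux]
  | succ N ih =>
    have hg := (geom_aux (2 * (N : ℝ) + 1) u (by have : (0:ℝ) ≤ N := by positivity
                                                 linarith) hu).mul_left v
    have hp := hg.mul ih (summable_mul_of_summable_norm hg.summable.norm ih.summable.norm)
    have hinj : Function.Injective (fun p : ℕ × List ℕ => p.1 :: p.2) := by
      rintro ⟨a, b⟩ ⟨c, d⟩ h; simpa using h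
    have hq : HasSum (fun L : List ℕ => (hhAux (L.map Nat.succ) (2 * (N + 1) + 1)
        - hhAux (L.map Nat.succ) (2 * N + 1)) * u ^ L.sum * v ^ L.length)
        (v * (1 / (2 * (N : ℝ) + 1 - u)) *
          ∏ j ∈ Finset.range N, (1 + v / (2 * (j : ℝ) + 1 - u))) := by
      rw [← hinj.hasSum_iff]
      · refine hasSum_conv_aux hp (fun p => ?_) rfl
        obtain ⟨k, L⟩ := p
        have h1 : ¬ Odd (2 * N + 2) := by rw [Nat.not_odd_iff_even]; exact ⟨N + 1, by ring⟩
        have h2 : Odd (2 * N + 1) := ⟨N, rfl⟩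
        simp only [Function.comp, List.map_cons, hhAux, List.sum_cons, List.length_cons]
        rw [show 2 * (N + 1) + 1 = 2 * N + 1 + 1 + 1 by ring, Finset.sum_range_succ,
          Finset.sum_range_succ, if_pos h2, if_neg h1]
        push_cast
        rw [Nat.succ_eq_add_one]
        ring
      · intro L hL
        cases L with
        | nil => simp [hhAux]
        | cons k L => exact absurd ⟨(k, L), rfl⟩ hL
    have := ih.add hq
    convert this using 1
    · funext L; ring
    · rw [Finset.prod_range_succ]; ring

noncomputable def BAux (u v : ℝ) (N : ℕ) : ℝ :=
  1 / ((2 * (N : ℝ) + 1) * (2 * (N : ℝ) + 1 - u)) *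
    ∏ j ∈ Finset.range N, (1 + v / (2 * (j : ℝ) + 1 - u))

noncomputable def FAux (u v : ℝ) (p : ℕ × (ℕ × List ℕ)) : ℝ :=
  (((2 * p.1 + 1 : ℕ) : ℝ) ^ (p.2.1 + 2))⁻¹ * hhAux (p.2.2.map Nat.succ) (2 * p.1 + 1)
    * u ^ (p.2.1 + p.2.2.sum) * v ^ p.2.2.length

theorem F_inner (u v : ℝ) (hu : |u| < 1) (N : ℕ) :
    HasSum (fun q => FAux u v (N, q)) (BAux u v N) := by
  have hg := (geom_aux (2 * (N : ℝ) + 1) u (by have : (0:ℝ) ≤ N := by positivity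
                                               linarith) hu).mul_left (2 * (N : ℝ) + 1)⁻¹
  have ih := P_aux u v hu N
  have hp := hg.mul ih (summable_mul_of_summable_norm hg.summable.norm ih.summable.norm)
  refine hasSum_conv_aux hp ?_ ?_
  · intro q
    unfold FAux
    push_cast
    rw [pow_succ _ (q.1 + 1), mul_inv, pow_add]
    ring
  · unfold BAux
    rw [one_div, mul_inv, one_div]

theorem B_summable (u v : ℝ) (hu0 : 0 ≤ u) (hv0 : 0 ≤ v) (hu : u < 1 / 4) (hv : v < 1 / 4) :
    Summable (BAux u v) := by
  have hprod : ∀ N : ℕ, ∏ j ∈ Finset.range N, (1 + v / (2 * (j : ℝ) + 1 - u)) ≤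
      Real.sqrt ((N : ℝ) + 1) := by
    intro N
    induction N with
    | zero => simp
    | succ N ih =>
      rw [Finset.prod_range_succ]
      have hN : (0:ℝ) ≤ N := by positivity
      have h1 : v / (2 * (N : ℝ) + 1 - u) ≤ 1 / (3 * ((N : ℝ) + 1)) := by
        rw [div_le_div_iff₀ (by linarith) (by linarith)]
        nlinarith
      have h0 : 0 ≤ v / (2 * (N : ℝ) + 1 - u) := div_nonneg hv0 (by linarith)
      have h2 : 1 + v / (2 * (N : ℝ) + 1 - u) ≤ Real.sqrt (((N : ℝ) + 2) / (N + 1)) := by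
        apply Real.le_sqrt_of_sq_le
        have : (1 + v / (2 * (N : ℝ) + 1 - u)) ^ 2 ≤ (1 + 1 / (3 * ((N : ℝ) + 1))) ^ 2 := by
          gcongr
        refine this.trans ?_
        rw [← sub_nonneg]
        have : ((N : ℝ) + 2) / (N + 1) - (1 + 1 / (3 * ((N : ℝ) + 1))) ^ 2
          = (3 * N + 2) / (9 * ((N : ℝ) + 1) ^ 2) := by
          field_simp; ring
        rw [this]; positivity
      calc _ ≤ Real.sqrt ((N : ℝ) + 1) * Real.sqrt (((N : ℝ) + 2) / (N + 1)) :=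
            mul_le_mul ih h2 (by linarith) (Real.sqrt_nonneg _)
        _ = Real.sqrt (((N + 1 : ℕ) : ℝ) + 1) := by
            rw [← Real.sqrt_mul (by linarith)]
            congr 1; push_cast; field_simp; ring
  have hs : Summable (fun N : ℕ => 2 * (1 / ((N + 1 : ℕ) : ℝ) ^ (3 / 2 : ℝ))) := by
    apply Summable.mul_left
    exact (summable_nat_add_iff 1).mpr
      (Real.summable_one_div_nat_rpow.mpr (by norm_num : (1:ℝ) < 3 / 2))
  refine Summable.of_nonneg_of_le (fun N => ?_) (fun N => ?_) hs
  · have hN : (0:ℝ) ≤ N := by positivity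
    unfold BAux
    refine mul_nonneg (div_nonneg zero_le_one (mul_nonneg (by linarith) (by linarith)))
      (Finset.prod_nonneg fun j _ => ?_)
    have hj : (0:ℝ) ≤ j := by positivity
    have := div_nonneg hv0 (by linarith : 0 ≤ 2 * (j : ℝ) + 1 - u)
    linarith
  · have hN : (0:ℝ) ≤ N := by positivity
    unfold BAux
    have hpos : (0:ℝ) < N + 1 := by linarith
    have e : 2 * (1 / ((N + 1 : ℕ) : ℝ) ^ (3 / 2 : ℝ))
        = 2 / ((N : ℝ) + 1) ^ 2 * Real.sqrt ((N : ℝ) + 1) := by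
      push_cast
      have h2 : ((N : ℝ) + 1) ^ 2 = ((N : ℝ) + 1) ^ (3 / 2 : ℝ) * Real.sqrt ((N : ℝ) + 1) := by
        rw [Real.sqrt_eq_rpow, ← Real.rpow_add hpos, ← Real.rpow_natCast]
        norm_num
      rw [h2]
      have := (Real.sqrt_pos.mpr hpos).ne'
      have := (Real.rpow_pos_of_pos hpos (3/2)).ne'
      field_simp
    rw [e]
    refine mul_le_mul ?_ (hprod N) (Finset.prod_nonneg fun j _ => ?_) (by positivity)
    · rw [div_le_div_iff₀ (mul_pos (by linarith) (by linarith)) (by positivity)]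
      nlinarith
    · have hj : (0:ℝ) ≤ j := by positivity
      have := div_nonneg hv0 (by linarith : 0 ≤ 2 * (j : ℝ) + 1 - u)
      linarith

theorem F_summable (u v : ℝ) (hu : |u| < 1 / 4) (hv : |v| < 1 / 4) : Summable (FAux u v) := by
  have h : Summable (FAux |u| |v|) := by
    have hu1 : |(|u|)| < 1 := by rw [abs_abs]; linarith
    refine (hasSum_prod_nonneg_aux ?_ (F_inner |u| |v| hu1)
      (B_summable _ _ (abs_nonneg u) (abs_nonneg v) hu hv).hasSum).summable
    intro p
    unfold FAux
    have := hhAux_nonneg (p.2.2.map Nat.succ) (2 * p.1 + 1)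
    positivity
  refine Summable.of_norm_bounded h fun p => ?_
  unfold FAux
  have := hhAux_nonneg (p.2.2.map Nat.succ) (2 * p.1 + 1)
  rw [Real.norm_eq_abs, abs_mul, abs_mul, abs_mul, abs_pow, abs_pow, abs_of_nonneg this,
    abs_of_nonneg (by positivity : (0:ℝ) ≤ (((2 * p.1 + 1 : ℕ) : ℝ) ^ (p.2.1 + 2))⁻¹)]

theorem inner_multT (k : ℕ) (L : List ℕ) :
    HasSum (fun N : ℕ => (((2 * N + 1 : ℕ) : ℝ) ^ (k + 2))⁻¹ *
      hhAux (L.map Nat.succ) (2 * N + 1)) (multT ((k + 2) :: L.map Nat.succ)) := by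
  apply multT_cons
  have h := F_summable (1/8) (1/8) (by rw [abs_of_pos] <;> norm_num) (by rw [abs_of_pos] <;> norm_num)
  have h2 := ((Equiv.prodComm _ _).summable_iff.mpr h).prod_factor (k, L)
  have h3 := h2.mul_right ((1/8 : ℝ) ^ (k + L.sum) * (1/8) ^ L.length)⁻¹
  refine h3.congr fun N => ?_
  simp only [FAux, Function.comp, Equiv.prodComm_apply, Prod.swap]
  field_simp

theorem hasSum_KL (u v : ℝ) (hu : |u| < 1 / 4) (hv : |v| < 1 / 4) :
    HasSum (fun q : ℕ × List ℕ => multT ((q.1 + 2) :: q.2.map Nat.succ) *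
      u ^ (q.1 + q.2.sum) * v ^ q.2.length) (∑' N, BAux u v N) := by
  have h := F_summable u v hu hv
  have h1 := h.hasSum.prod_fiberwise (F_inner u v (by linarith))
  rw [h1.tsum_eq]
  have h2 := (Equiv.prodComm _ _).hasSum_iff.mpr h.hasSum
  refine h2.prod_fiberwise fun q => ?_
  have := ((inner_multT q.1 q.2).mul_right (u ^ (q.1 + q.2.sum))).mul_right (v ^ q.2.length)
  exact this

theorem succ_sum (L : List ℕ) : (L.map Nat.succ).sum = L.sum + L.length := by
  induction L with
  | nil => simp
  | cons a L ih => simp only [List.map_cons, List.sum_cons, List.length_cons, ih]; omega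

theorem G0d_eq (p : ℕ × ℕ) (u v : ℝ) :
    G0d (p.1 + p.2 + 2) (p.2 + 1) * u ^ p.1 * v ^ p.2 =
    ∑' q : (fun q : ℕ × List ℕ => (q.1 + q.2.sum, q.2.length)) ⁻¹' {p},
      multT ((q.1.1 + 2) :: q.1.2.map Nat.succ) *
      u ^ (q.1.1 + q.1.2.sum) * v ^ q.1.2.length := by
  have e : (∑' q : (fun q : ℕ × List ℕ => (q.1 + q.2.sum, q.2.length)) ⁻¹' {p},
      multT ((q.1.1 + 2) :: q.1.2.map Nat.succ) *
      u ^ (q.1.1 + q.1.2.sum) * v ^ q.1.2.length) =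
      ∑' q : (fun q : ℕ × List ℕ => (q.1 + q.2.sum, q.2.length)) ⁻¹' {p},
      multT ((q.1.1 + 2) :: q.1.2.map Nat.succ) * (u ^ p.1 * v ^ p.2) := by
    refine tsum_congr fun q => ?_
    obtain ⟨q, rfl⟩ := q
    ring
  rw [e, tsum_mul_right, mul_assoc]
  congr 1
  rw [tsum_subtype ((fun q : ℕ × List ℕ => (q.1 + q.2.sum, q.2.length)) ⁻¹' {p})
    (fun q : ℕ × List ℕ => multT ((q.1 + 2) :: q.2.map Nat.succ))]
  have hinj : Function.Injective (fun q : ℕ × List ℕ => (q.1 + 2) :: q.2.map Nat.succ) := by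
    rintro ⟨a, b⟩ ⟨c, d⟩ h
    simp only [List.cons.injEq] at h
    have := List.map_injective_iff.mpr Nat.succ_injective h.2
    simp only [Prod.mk.injEq]
    exact ⟨by omega, this⟩
  unfold G0d
  rw [← hinj.tsum_eq]
  · refine tsum_congr fun q => ?_
    classical
    rw [Set.indicator_apply]
    refine if_congr ?_ rfl rfl
    simp only [Admissible, List.sum_cons, succ_sum, List.length_cons, List.length_map,
      Set.mem_preimage, Set.mem_singleton_iff, Prod.ext_iff, List.headI_cons]
    constructor
    · rintro ⟨_, h1, h2⟩
      constructor <;> omega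
    · rintro ⟨h1, h2⟩
      refine ⟨⟨?_, by omega⟩, by omega, by omega⟩
      intro i hi
      simp only [List.mem_cons, List.mem_map] at hi
      rcases hi with rfl | ⟨a, _, rfl⟩ <;> omega
  · intro K hK
    have hK : Admissible K := by
      by_contra h
      apply hK
      simp [h]
    cases K with
    | nil => exact absurd hK.2 (by simp)
    | cons a K =>
      refine ⟨(a - 2, K.map Nat.pred), ?_⟩
      have h2 : 2 ≤ a := hK.2
      have h1 : ∀ i ∈ K, 1 ≤ i := fun i hi => hK.1 i (List.mem_cons_of_mem _ hi)
      simp only [List.map_map, List.cons.injEq]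
      refine ⟨by omega, ?_⟩
      conv_rhs => rw [← List.map_id K]
      refine List.map_congr_left fun i hi => ?_
      have := h1 i hi
      simp only [Function.comp, id]
      exact Nat.succ_pred_eq_of_pos this

theorem hasSum_G (u v : ℝ) (hu : |u| < 1 / 4) (hv : |v| < 1 / 4) :
    HasSum (fun p : ℕ × ℕ => G0d (p.1 + p.2 + 2) (p.2 + 1) * u ^ p.1 * v ^ p.2)
      (∑' N, BAux u v N) := by
  have h := hasSum_KL u v hu hv
  have h2 := h.tsum_fiberwise (fun q : ℕ × List ℕ => (q.1 + q.2.sum, q.2.length))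
  exact hasSum_conv_aux h2 (fun p => G0d_eq p u v) rfl

theorem poch_half (n : ℕ) : poch (3 / 2) n = poch (1 / 2) n * (2 * n + 1) := by
  induction n with
  | zero => simp [poch]
  | succ n ih =>
    unfold poch at *
    rw [Finset.prod_range_succ, Finset.prod_range_succ, ih]
    push_cast; ring

theorem poch_one (n : ℕ) : poch 1 n = n.factorial := by
  induction n with
  | zero => simp [poch]
  | succ n ih =>
    unfold poch at *
    rw [Finset.prod_range_succ, ih, Nat.factorial_succ]
    push_cast; ring

theorem poch_u (u : ℂ) (n : ℕ) :
    (1 - u) * poch ((3 - u) / 2) n = poch ((1 - u) / 2) n * (2 * n + 1 - u) := by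
  induction n with
  | zero => simp [poch]
  | succ n ih =>
    unfold poch at *
    rw [Finset.prod_range_succ, Finset.prod_range_succ, ← mul_assoc, ih]
    push_cast; ring

theorem poch_real_ne (a : ℝ) (ha : 0 < a) (n : ℕ) : poch (a : ℂ) n ≠ 0 := by
  unfold poch
  rw [Finset.prod_ne_zero_iff]
  intro i _
  have : (0:ℝ) < a + i := by positivity
  exact_mod_cast this.ne'

theorem poch_ratio (u v : ℝ) (hu : |u| < 1 / 4) (n : ℕ) :
    poch ((1 - (u:ℂ) + v) / 2) n = poch ((1 - (u:ℂ)) / 2) n *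
      ((∏ j ∈ Finset.range n, (1 + v / (2 * (j : ℝ) + 1 - u)) : ℝ) : ℂ) := by
  unfold poch
  rw [Complex.ofReal_prod, ← Finset.prod_mul_distrib]
  refine Finset.prod_congr rfl fun j _ => ?_
  have h : (2 * (j : ℝ) + 1 - u) ≠ 0 := by
    have := (abs_lt.mp hu).2
    have hj : (0:ℝ) ≤ j := by positivity
    intro h; linarith
  have h' : (2 * (j : ℂ) + 1 - u) ≠ 0 := by exact_mod_cast h
  push_cast
  field_simp
  ring

theorem hyp_term (u v : ℝ) (hu : |u| < 1 / 4) (n : ℕ) :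
    (1 - (u : ℂ))⁻¹ * (poch ((1 - (u : ℂ) + (v : ℂ)) / 2) n * poch (1 / 2) n * poch 1 n /
      ((n.factorial : ℂ) * poch ((3 - (u : ℂ)) / 2) n * poch (3 / 2) n) * 1 ^ n)
    = ((BAux u v n : ℝ) : ℂ) := by
  have hu2 := (abs_lt.mp hu).2
  have hn : (0:ℝ) ≤ n := by positivity
  have h1 : (1 - (u:ℂ)) ≠ 0 := by
    have : (1 - u) ≠ 0 := by intro h; linarith
    exact_mod_cast this
  have h2 : (2 * (n : ℂ) + 1 - u) ≠ 0 := by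
    have : (2 * (n : ℝ) + 1 - u) ≠ 0 := by intro h; linarith
    exact_mod_cast this
  have h3 : (2 * (n : ℂ) + 1) ≠ 0 := by
    have : (2 * (n : ℝ) + 1) ≠ 0 := by intro h; linarith
    exact_mod_cast this
  have h4 : poch (1 / 2) n ≠ 0 := by
    have := poch_real_ne (1 / 2) (by norm_num) n
    push_cast at this; exact this
  have h5 : poch ((1 - (u:ℂ)) / 2) n ≠ 0 := by
    have := poch_real_ne ((1 - u) / 2) (by linarith) n
    push_cast at this; exact this
  have h6 : (n.factorial : ℂ) ≠ 0 := by exact_mod_cast n.factorial_ne_zero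
  have h7 : poch ((3 - (u:ℂ)) / 2) n =
      poch ((1 - (u:ℂ)) / 2) n * (2 * n + 1 - u) / (1 - u) := by
    rw [← poch_u]; field_simp
  unfold BAux
  rw [poch_ratio u v hu, poch_half, poch_one, h7, Complex.ofReal_mul]
  generalize ((∏ j ∈ Finset.range n, (1 + v / (2 * (j : ℝ) + 1 - u)) : ℝ) : ℂ) = X
  push_cast
  field_simp
  simp

/-- Generating function of the sums `G₀(k,n)` of multiple `t`-values of fixed weight and
depth: `∑_{k>n≥1} G₀(k,n) u^{k-n-1} v^{n-1} = (1/(1-u)) ⬝ ₃F₂((1-u+v)/2, 1/2, 1; (3-u)/2, 3/2; 1)`. -/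
theorem weight_depth_generating_function_multiple_t :
    ∃ δ > (0 : ℝ), ∀ u v : ℝ, |u| < δ → |v| < δ →
      Summable (fun p : ℕ × ℕ =>
        G0d (p.1 + p.2 + 2) (p.2 + 1) * u ^ p.1 * v ^ p.2) ∧
      ((∑' p : ℕ × ℕ, G0d (p.1 + p.2 + 2) (p.2 + 1) * u ^ p.1 * v ^ p.2 : ℝ) : ℂ)
        = (1 - (u : ℂ))⁻¹ *
            hyp3F2 ((1 - (u : ℂ) + (v : ℂ)) / 2) (1 / 2) 1
              ((3 - (u : ℂ)) / 2) (3 / 2) 1 := by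
  refine ⟨1 / 4, by norm_num, fun u v hu hv => ?_⟩
  have h := hasSum_G u v hu hv
  refine ⟨h.summable, ?_⟩
  rw [h.tsum_eq, Complex.ofReal_tsum, hyp3F2, ← tsum_mul_left]
  exact tsum_congr fun n => (hyp_term u v hu n).symm
end

section
/- There exists δ > 0 such that for all real u, v with |u|, |v| < δ, ∑_{k > n ≥ 1} G_0^*(k,n) u^{k−n−1} v^{n−1} = (1/(1−u−v)) · ₃F₂((1−u)/2, 1/2, 1; (3−u−v)/2, 3/2; 1), the series converging absolutely. -/
open scoped BigOperators

theorem hs_list {f : List ℕ → ℝ} {a : ℝ}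
    (h : HasSum (fun p : ℕ × List ℕ => f (p.1 :: p.2)) a) : HasSum f (f [] + a) := by
  have hinj : Function.Injective (fun p : ℕ × List ℕ => p.1 :: p.2) := by
    rintro ⟨a, b⟩ ⟨c, d⟩ h
    simpa using h
  have h2 : HasSum (fun K : List ℕ => if K = [] then 0 else f K) a := by
    rw [← hinj.hasSum_iff]
    · simpa [Function.comp_def] using h
    · intro x hx
      cases x with
      | nil => simp
      | cons k K => exact absurd ⟨(k, K), rfl⟩ hx
  have h1 : HasSum (fun K : List ℕ => if K = [] then f [] else 0) (f []) :=
    hasSum_ite_eq [] (f [])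
  refine (h1.add h2).congr_fun ?_
  intro K
  by_cases hK : K = [] <;> simp [hK]

theorem hs_mul {f : ℕ → ℝ} {g : List ℕ → ℝ} {a b : ℝ} (hf : HasSum f a) (hg : HasSum g b)
    (hf' : Summable (fun k => |f k|)) (hg' : Summable (fun K => ‖g K‖)) :
    HasSum (fun p : ℕ × List ℕ => f p.1 * g p.2) (a * b) :=
  HasSum.mul hf hg (summable_mul_of_summable_norm (f := f) (g := g) hf' hg')

theorem hs_mul0 {f : ℕ → ℝ} {g : List ℕ → ℝ} {a b : ℝ} (hf : HasSum f a) (hg : HasSum g b)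
    (hf' : ∀ k, 0 ≤ f k) (hg' : ∀ k, 0 ≤ g k) :
    HasSum (fun p : ℕ × List ℕ => f p.1 * g p.2) (a * b) :=
  HasSum.mul hf hg (Summable.mul_of_nonneg hf.summable hg.summable hf' hg')

noncomputable def rr (x : ℕ → ℕ → ℝ) : List ℕ → ℕ → ℝ
  | [], _ => 1
  | k :: K, N => ∑ j ∈ Finset.range (N + 1), x k j * rr x K j

theorem rr_nonneg {x : ℕ → ℕ → ℝ} (hx : ∀ k j, 0 ≤ x k j) : ∀ K N, 0 ≤ rr x K N
  | [], _ => by simp [rr]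
  | k :: K, N => by
    rw [rr]
    exact Finset.sum_nonneg fun j _ => mul_nonneg (hx k j) (rr_nonneg hx K j)

theorem rr_abs {x : ℕ → ℕ → ℝ} : ∀ K N, |rr x K N| ≤ rr (fun k j => |x k j|) K N
  | [], _ => by simp [rr]
  | k :: K, N => by
    rw [rr, rr]
    refine (Finset.abs_sum_le_sum_abs _ _).trans (Finset.sum_le_sum fun j _ => ?_)
    rw [abs_mul]
    exact mul_le_mul_of_nonneg_left (rr_abs K j) (abs_nonneg _)

noncomputable def PP (y : ℕ → ℝ) (N : ℕ) : ℝ := ∏ j ∈ Finset.range (N + 1), (1 - y j)⁻¹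

theorem PP_rec {y : ℕ → ℝ} (hy : ∀ j, y j < 1) (N : ℕ) :
    PP y N = 1 + ∑ j ∈ Finset.range (N + 1), y j * PP y j := by
  induction N with
  | zero =>
    have := hy 0
    have : 1 - y 0 ≠ 0 := by linarith
    simp [PP]
    field_simp
    ring
  | succ N ih =>
    rw [Finset.sum_range_succ, ← add_assoc, ← ih]
    have := hy (N + 1)
    have : 1 - y (N + 1) ≠ 0 := by linarith
    have h : PP y (N + 1) = PP y N * (1 - y (N + 1))⁻¹ := by
      rw [PP, Finset.prod_range_succ, PP]
    rw [h]
    field_simp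
    ring

theorem PP_uniq {y S : ℕ → ℝ} (hy : ∀ j, y j < 1)
    (hS : ∀ N, S N = 1 + ∑ j ∈ Finset.range (N + 1), y j * S j) (N : ℕ) : S N = PP y N := by
  induction N using Nat.strong_induction_on with
  | _ N ih =>
    have h1 := hS N
    have h2 := PP_rec hy N
    rw [Finset.sum_range_succ] at h1 h2
    rw [Finset.sum_congr rfl fun j hj => by rw [ih j (Finset.mem_range.1 hj)]] at h1
    have := hy N
    have h3 : (1 - y N) * (S N - PP y N) = 0 := by linarith
    rcases mul_eq_zero.1 h3 with h | h <;> linarith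

theorem PP_pos {y : ℕ → ℝ} (hy : ∀ j, y j < 1) (N : ℕ) : 0 < PP y N :=
  Finset.prod_pos fun j _ => inv_pos.2 (by linarith [hy j])

theorem rr_summable_nonneg {x : ℕ → ℕ → ℝ} {y : ℕ → ℝ} (hx : ∀ k j, 0 ≤ x k j)
    (hxy : ∀ j, HasSum (fun k => x k j) (y j)) (hy : ∀ j, y j < 1) (N : ℕ) :
    Summable (fun K => rr x K N) := by
  have y0 : ∀ j, 0 ≤ y j := fun j => (hxy j).nonneg fun k => hx k j
  have key : ∀ Q : ℕ, ∀ N, ∃ T, T ≤ PP y N ∧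
      HasSum (fun K : List ℕ => if K.length ≤ Q then rr x K N else 0) T := by
    intro Q
    induction Q with
    | zero =>
      intro N
      refine ⟨1, ?_, ?_⟩
      · rw [PP_rec hy]
        have := Finset.sum_nonneg (s := Finset.range (N + 1)) (f := fun j => y j * PP y j)
          fun j _ => mul_nonneg (y0 j) (PP_pos hy j).le
        linarith
      · convert hasSum_ite_eq ([] : List ℕ) (1 : ℝ) using 2 with K
        cases K <;> simp [rr]
    | succ Q ih =>
      intro N
      choose T hT hT' using ih
      refine ⟨1 + ∑ j ∈ Finset.range (N + 1), y j * T j, ?_, ?_⟩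
      · rw [PP_rec hy]
        gcongr with j hj
        · exact y0 j
        · exact hT j
      · have : HasSum (fun p : ℕ × List ℕ =>
            ∑ j ∈ Finset.range (N + 1),
              x p.1 j * (if p.2.length ≤ Q then rr x p.2 j else 0))
            (∑ j ∈ Finset.range (N + 1), y j * T j) := by
          refine hasSum_sum fun j _ => ?_
          refine hs_mul0 (f := fun k => x k j)
            (g := fun K : List ℕ => if K.length ≤ Q then rr x K j else 0)
            (hxy j) (hT' j) (fun k => hx k j) (fun K => ?_)
          split_ifs
          · exact rr_nonneg hx _ _
          · exact le_rfl
        have h0 : HasSum (fun p : ℕ × List ℕ =>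
            if (p.1 :: p.2).length ≤ Q + 1 then rr x (p.1 :: p.2) N else 0)
            (∑ j ∈ Finset.range (N + 1), y j * T j) := by
          refine this.congr_fun ?_
          rintro ⟨k, K⟩
          by_cases h : K.length ≤ Q
          · simp [rr, h]
          · simp [h]
        have h := hs_list (f := fun K : List ℕ => if K.length ≤ Q + 1 then rr x K N else 0) h0
        have e : (1 : ℝ) = if ([] : List ℕ).length ≤ Q + 1 then rr x [] N else 0 := by simp [rr]
        rw [e]
        exact h
  refine summable_of_sum_le (c := PP y N) (fun K => rr_nonneg hx K N) ?_
  intro s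
  obtain ⟨T, hT, hT'⟩ := key (s.sup List.length) N
  refine le_trans ?_ ((sum_le_hasSum s ?_ hT').trans hT)
  · refine Finset.sum_le_sum fun K hK => ?_
    rw [if_pos (Finset.le_sup (f := List.length) hK)]
  · intro K _
    split_ifs
    · exact rr_nonneg hx _ _
    · exact le_rfl

theorem rr_hasSum {x : ℕ → ℕ → ℝ} {y z : ℕ → ℝ}
    (hxy : ∀ j, HasSum (fun k => x k j) (y j)) (hxz : ∀ j, HasSum (fun k => |x k j|) (z j))
    (hy : ∀ j, y j < 1) (hz : ∀ j, z j < 1) (N : ℕ) :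
    HasSum (fun K => rr x K N) (PP y N) := by
  have hab : ∀ N, Summable (fun K => ‖rr x K N‖) := fun N =>
    Summable.of_nonneg_of_le (fun _ => norm_nonneg _) (fun K => rr_abs K N)
      (rr_summable_nonneg (fun _ _ => abs_nonneg _) hxz hz N)
  have hs : ∀ N, HasSum (fun K => rr x K N) (∑' K, rr x K N) := fun N => (hab N).of_norm.hasSum
  have hrec : ∀ N, (∑' K, rr x K N)
      = 1 + ∑ j ∈ Finset.range (N + 1), y j * (∑' K, rr x K j) := by
    intro N
    refine (hs N).unique ?_
    refine hs_list (f := fun K => rr x K N) ?_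
    simp only [rr]
    refine hasSum_sum fun j _ => ?_
    exact hs_mul (f := fun k => x k j) (g := fun K => rr x K j)
      (hxy j) (hs j) (hxz j).summable (hab j)
  rw [← PP_uniq hy hrec N]
  exact hs N

theorem rr_summable_abs {x : ℕ → ℕ → ℝ} {z : ℕ → ℝ}
    (hxz : ∀ j, HasSum (fun k => |x k j|) (z j)) (hz : ∀ j, z j < 1) (N : ℕ) :
    Summable (fun K => ‖rr x K N‖) :=
  Summable.of_nonneg_of_le (fun _ => norm_nonneg _) (fun K => rr_abs K N)
      (rr_summable_nonneg (fun _ _ => abs_nonneg _) hxz hz N)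

noncomputable def x0 (k j : ℕ) : ℝ := (((2 * j + 1 : ℕ) : ℝ) ^ k)⁻¹

theorem x0_nonneg (k j : ℕ) : 0 ≤ x0 k j := by unfold x0; positivity

def SC {n : ℕ} (m : Fin n → ℕ) : Prop :=
  (∀ i, Odd (m i)) ∧ (∀ i j : Fin n, i < j → m j ≤ m i)

theorem SC_cons {n : ℕ} (a : ℕ) (m : Fin n → ℕ) :
    SC (Fin.cons a m : Fin (n + 1) → ℕ) ↔ Odd a ∧ SC m ∧ ∀ i, m i ≤ a := by
  unfold SC
  constructor
  · rintro ⟨h1, h2⟩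
    refine ⟨by simpa using h1 0, ⟨fun i => by simpa using h1 i.succ, fun i j hij => ?_⟩,
      fun i => ?_⟩
    · simpa using h2 i.succ j.succ (by simpa using hij)
    · simpa using h2 0 i.succ (Fin.succ_pos i)
  · rintro ⟨h0, ⟨h1, h2⟩, h3⟩
    refine ⟨fun i => ?_, fun i j hij => ?_⟩
    · refine Fin.cases ?_ (fun i => ?_) i
      · simpa using h0
      · simpa using h1 i
    · induction j using Fin.cases with
      | zero => exact absurd hij (Fin.not_lt_zero i)
      | succ j =>
        induction i using Fin.cases with
        | zero => simpa using h3 j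
        | succ i => simpa using h2 i j (by simpa using hij)

open Classical in
theorem tsum_odd (f : ℕ → ENNReal) :
    ∑' a : ℕ, (if Odd a then f a else 0) = ∑' j : ℕ, f (2 * j + 1) := by
  have hinj : Function.Injective (fun j : ℕ => 2 * j + 1) := by
    intro a b h
    simp only at h
    omega
  rw [← hinj.tsum_eq]
  · refine tsum_congr fun j => ?_
    rw [if_pos ⟨j, rfl⟩]
  · intro a ha
    by_contra hn
    apply ha
    refine if_neg ?_
    rintro ⟨j, rfl⟩
    exact hn ⟨j, rfl⟩

open Classical in
theorem star_step (k : ℕ) (K : List ℕ) (B : ℕ → Prop)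
    (ih : ∀ M : ℕ, ∑' m : Fin K.length → ℕ,
      (if SC m ∧ ∀ i, m i ≤ 2 * M + 1 then ENNReal.ofReal (∏ i, ((m i : ℝ) ^ K.get i)⁻¹) else 0)
        = ENNReal.ofReal (rr x0 K M)) :
    ∑' m : Fin (k :: K).length → ℕ,
      (if SC m ∧ B (m ⟨0, Nat.succ_pos _⟩) then
        ENNReal.ofReal (∏ i, ((m i : ℝ) ^ (k :: K).get i)⁻¹) else 0)
      = ∑' j : ℕ, if B (2 * j + 1) then ENNReal.ofReal (x0 k j * rr x0 K j) else 0 := by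
  refine (Equiv.tsum_eq (Fin.consEquiv (fun _ : Fin (K.length + 1) => ℕ)) _).symm.trans ?_
  rw [ENNReal.tsum_prod']
  have h : ∀ a : ℕ, (∑' m : Fin K.length → ℕ,
      (if SC (Fin.cons a m : Fin (K.length + 1) → ℕ) ∧ B a then
        ENNReal.ofReal (∏ i : Fin (K.length + 1),
          (((Fin.cons a m : Fin (K.length + 1) → ℕ) i : ℝ) ^ (k :: K).get i)⁻¹) else 0))
      = if Odd a then (if B a then ENNReal.ofReal (((a : ℝ) ^ k)⁻¹) *
          ∑' m : Fin K.length → ℕ, (if SC m ∧ ∀ i, m i ≤ a then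
            ENNReal.ofReal (∏ i, ((m i : ℝ) ^ K.get i)⁻¹) else 0) else 0) else 0 := by
    intro a
    simp only [SC_cons]
    by_cases ha : Odd a
    · by_cases hB : B a
      · simp only [ha, hB, true_and, and_true, if_true]
        rw [← ENNReal.tsum_mul_left]
        refine tsum_congr fun m => ?_
        split_ifs
        · rw [← ENNReal.ofReal_mul (by positivity), Fin.prod_univ_succ]
          simp
        · simp
      · simp [hB]
    · simp [ha]
  refine (tsum_congr h).trans ?_
  rw [tsum_odd]
  refine tsum_congr fun j => ?_
  rw [ih j, ← ENNReal.ofReal_mul (by positivity)]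
  rfl

open Classical in
theorem star_trunc (K : List ℕ) : ∀ M : ℕ, ∑' m : Fin K.length → ℕ,
      (if SC m ∧ ∀ i, m i ≤ 2 * M + 1 then ENNReal.ofReal (∏ i, ((m i : ℝ) ^ K.get i)⁻¹) else 0)
        = ENNReal.ofReal (rr x0 K M) := by
  induction K with
  | nil =>
    intro M
    simp only [List.length_nil]
    rw [tsum_eq_single (fun i => 0)]
    · simp [SC, rr]
    · intro b hb
      exact absurd (Subsingleton.elim _ _) hb
  | cons k K ih =>
    intro M
    have h := star_step k K (fun a => a ≤ 2 * M + 1) ih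
    have e : ∀ m : Fin (k :: K).length → ℕ, (SC m ∧ ∀ i, m i ≤ 2 * M + 1) ↔
        (SC m ∧ m ⟨0, Nat.succ_pos _⟩ ≤ 2 * M + 1) := by
      intro m
      constructor
      · exact fun h => ⟨h.1, h.2 _⟩
      · rintro ⟨h1, h2⟩
        refine ⟨h1, fun i => ?_⟩
        by_cases hi : (⟨0, Nat.succ_pos _⟩ : Fin (k :: K).length) < i
        · exact (h1.2 _ _ hi).trans h2
        · have : i = ⟨0, Nat.succ_pos _⟩ := by
            rw [Fin.lt_def] at hi
            apply Fin.ext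
            simp only at hi ⊢
            omega
          rw [this]
          exact h2
    refine Eq.trans (tsum_congr fun m => ?_) (h.trans ?_)
    · by_cases hh : SC m ∧ ∀ i, m i ≤ 2 * M + 1
      · rw [if_pos hh, if_pos ((e m).1 hh)]
      · rw [if_neg hh, if_neg (fun h' => hh ((e m).2 h'))]
    rw [rr, ENNReal.ofReal_sum_of_nonneg, tsum_eq_sum (s := Finset.range (M + 1))]
    · refine Finset.sum_congr rfl fun j hj => ?_
      rw [if_pos]
      have := Finset.mem_range.1 hj
      omega
    · intro j hj
      rw [if_neg]
      have : ¬ j < M + 1 := fun h => hj (Finset.mem_range.2 h)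
      omega
    · intro j _
      exact mul_nonneg (x0_nonneg _ _) (rr_nonneg x0_nonneg _ _)

theorem multTStar_cons (k : ℕ) (K : List ℕ) :
    multTStar (k :: K) = ∑' j : ℕ, x0 k j * rr x0 K j := by
  classical
  have h := star_step k K (fun _ => True) (star_trunc K)
  have h2 := congrArg ENNReal.toReal h
  rw [ENNReal.tsum_toReal_eq, ENNReal.tsum_toReal_eq] at h2
  · unfold multTStar
    convert h2 using 1
    · refine tsum_congr fun m => ?_
      by_cases hm : SC m
      · refine (if_pos hm).trans ?_
        rw [if_pos ⟨hm, trivial⟩, ENNReal.toReal_ofReal (by positivity)]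
      · refine (if_neg hm).trans ?_
        rw [if_neg (fun h => hm h.1), ENNReal.toReal_zero]
    · refine tsum_congr fun j => ?_
      rw [if_pos trivial, ENNReal.toReal_ofReal]
      exact mul_nonneg (x0_nonneg _ _) (rr_nonneg x0_nonneg _ _)
  · intro j
    simp
  · intro m
    split_ifs <;> simp

noncomputable def xw (u v : ℝ) (k j : ℕ) : ℝ := if 1 ≤ k then u ^ (k - 1) * v * x0 k j else 0

noncomputable def hd (u : ℝ) (k j : ℕ) : ℝ := if 2 ≤ k then u ^ (k - 2) * x0 k j else 0

noncomputable def FF (u v : ℝ) : List ℕ → ℕ → ℝ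
  | [], _ => 0
  | k :: K, N => hd u k N * rr (xw u v) K N

theorem mm_pos (j : ℕ) : (1 : ℝ) ≤ ((2 * j + 1 : ℕ) : ℝ) := by
  exact_mod_cast Nat.succ_le_succ (Nat.zero_le _)

theorem geo_aux {u m : ℝ} (hu : |u| < 1) (hm : 1 ≤ m) :
    HasSum (fun k : ℕ => (u / m) ^ k) (m / (m - u)) := by
  have hlt : |u / m| < 1 := by
    rw [abs_div, abs_of_pos (by linarith : 0 < m), div_lt_one (by linarith)]
    linarith
  have := hasSum_geometric_of_abs_lt_one hlt
  convert this using 1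
  have : u < 1 := (abs_lt.1 hu).2
  have : m - u ≠ 0 := by linarith
  have : m ≠ 0 := by linarith
  field_simp

theorem xw_hasSum {u : ℝ} (v : ℝ) (hu : |u| < 1) (j : ℕ) :
    HasSum (fun k => xw u v k j) (v / (((2 * j + 1 : ℕ) : ℝ) - u)) := by
  rw [← hasSum_nat_add_iff' 1]
  have hm := mm_pos j
  set m : ℝ := ((2 * j + 1 : ℕ) : ℝ) with hmdef
  have hu' : u < 1 := (abs_lt.1 hu).2
  have h1 : m - u ≠ 0 := by linarith
  have h2 : m ≠ 0 := by linarith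
  have hval : v / (m - u) - ∑ i ∈ Finset.range 1, xw u v i j = v / m * (m / (m - u)) := by
    simp [xw]
    field_simp
  rw [hval]
  refine ((geo_aux hu hm).mul_left (v / m)).congr_fun fun k => ?_
  · simp only [xw, x0, ← hmdef]
    rw [if_pos (by omega), Nat.add_sub_cancel, div_pow, pow_succ]
    field_simp

theorem hd_hasSum {u : ℝ} (hu : |u| < 1) (j : ℕ) :
    HasSum (fun k => hd u k j)
      ((((2 * j + 1 : ℕ) : ℝ) * (((2 * j + 1 : ℕ) : ℝ) - u))⁻¹) := by
  rw [← hasSum_nat_add_iff' 2]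
  have hm := mm_pos j
  set m : ℝ := ((2 * j + 1 : ℕ) : ℝ) with hmdef
  have hu' : u < 1 := (abs_lt.1 hu).2
  have h1 : m - u ≠ 0 := by linarith
  have h2 : m ≠ 0 := by linarith
  have hval : (m * (m - u))⁻¹ - ∑ i ∈ Finset.range 2, hd u i j = (m ^ 2)⁻¹ * (m / (m - u)) := by
    simp [hd, Finset.sum_range_succ]
    field_simp
  rw [hval]
  refine ((geo_aux hu hm).mul_left ((m ^ 2)⁻¹)).congr_fun fun k => ?_
  · simp only [hd, x0, ← hmdef]
    rw [if_pos (by omega), Nat.add_sub_cancel, div_pow, pow_add]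
    field_simp

theorem xw_abs (u v : ℝ) (k j : ℕ) : |xw u v k j| = xw |u| |v| k j := by
  unfold xw
  split_ifs
  · rw [abs_mul, abs_mul, abs_pow, abs_of_nonneg (x0_nonneg k j)]
  · simp

theorem hd_abs (u : ℝ) (k j : ℕ) : |hd u k j| = hd |u| k j := by
  unfold hd
  split_ifs
  · rw [abs_mul, abs_pow, abs_of_nonneg (x0_nonneg k j)]
  · simp

theorem FF_abs (u v : ℝ) (K : List ℕ) (N : ℕ) : |FF u v K N| ≤ FF |u| |v| K N := by
  cases K with
  | nil => simp [FF]
  | cons k K =>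
    rw [FF, FF, abs_mul, hd_abs]
    refine mul_le_mul_of_nonneg_left ?_ (by rw [← hd_abs]; exact abs_nonneg _)
    have := rr_abs (x := xw u v) K N
    simpa only [xw_abs] using this

noncomputable def AA (u v : ℝ) (N : ℕ) : ℝ :=
  (((2 * N + 1 : ℕ) : ℝ) * (((2 * N + 1 : ℕ) : ℝ) - u))⁻¹ *
    PP (fun j => v / (((2 * j + 1 : ℕ) : ℝ) - u)) N

theorem y_lt {u v : ℝ} (hu : |u| < 1 / 8) (hv : |v| < 1 / 8) (j : ℕ) :
    v / (((2 * j + 1 : ℕ) : ℝ) - u) < 1 := by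
  have := mm_pos j
  have := abs_lt.1 hu
  have := abs_lt.1 hv
  rw [div_lt_one (by linarith)]
  linarith

theorem FF_hasSum {u v : ℝ} (hu : |u| < 1 / 8) (hv : |v| < 1 / 8) (N : ℕ) :
    HasSum (fun K => FF u v K N) (AA u v N) := by
  have hu1 : |u| < 1 := by linarith
  have hu2 : |(|u|)| < 1 := by rwa [abs_abs]
  have hz : ∀ j, HasSum (fun k => |xw u v k j|) (|v| / (((2 * j + 1 : ℕ) : ℝ) - |u|)) := by
    intro j
    simp only [xw_abs]
    exact xw_hasSum _ hu2 j
  have hz1 : ∀ j : ℕ, |v| / (((2 * j + 1 : ℕ) : ℝ) - |u|) < 1 :=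
    fun j => y_lt (by rwa [abs_abs]) (by rwa [abs_abs]) j
  have h1 := rr_hasSum (fun j => xw_hasSum v hu1 j) hz (fun j => y_lt hu hv j) hz1 N
  have h2 := rr_summable_abs hz hz1 N
  have h3 : Summable (fun k => |hd u k N|) := by
    simp only [hd_abs]
    exact (hd_hasSum hu2 N).summable
  have h4 := hs_mul (f := fun k => hd u k N) (g := fun K => rr (xw u v) K N)
    (hd_hasSum hu1 N) h1 h3 h2
  have h5 := hs_list (f := fun K => FF u v K N) h4
  have e : FF u v [] N = 0 := rfl
  rw [e, zero_add] at h5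
  exact h5

theorem PP_bound {u v : ℝ} (hu0 : 0 ≤ u) (hv0 : 0 ≤ v) (hu : u < 1 / 8) (hv : v < 1 / 8) (N : ℕ) :
    (PP (fun j => v / (((2 * j + 1 : ℕ) : ℝ) - u)) N) ^ 2 ≤ N + 2 := by
  have key : ∀ j : ℕ, ((1 - v / (((2 * j + 1 : ℕ) : ℝ) - u))⁻¹) ^ 2 * (j + 1) ≤ j + 2 := by
    intro j
    have hj : (0 : ℝ) ≤ j := Nat.cast_nonneg j
    push_cast
    have h1 : 0 < 2 * (j : ℝ) + 1 - u := by linarith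
    have h2 : 0 < 2 * (j : ℝ) + 1 - u - v := by linarith
    have e : (1 - v / (2 * (j : ℝ) + 1 - u))⁻¹ = (2 * (j : ℝ) + 1 - u) / (2 * (j : ℝ) + 1 - u - v) := by
      rw [← inv_div]
      congr 1
      field_simp
    rw [e, div_pow, div_mul_eq_mul_div, div_le_iff₀ (by positivity)]
    set w := 2 * (j : ℝ) + 1 - u - v with hw
    have e2 : 2 * (j : ℝ) + 1 - u = w + v := by rw [hw]; ring
    rw [e2]
    have hw' : 2 * (j : ℝ) + 3 / 4 ≤ w := by linarith
    have h3 : v * (j + 1) ≤ w / 6 := by nlinarith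
    nlinarith [mul_nonneg hv0 h2.le, mul_le_mul_of_nonneg_left h3 h2.le,
      mul_le_mul_of_nonneg_left h3 hv0]
  have hp : ∀ j : ℕ, 0 ≤ ((1 - v / (((2 * j + 1 : ℕ) : ℝ) - u))⁻¹) ^ 2 := fun j => sq_nonneg _
  unfold PP
  rw [← Finset.prod_pow]
  induction N with
  | zero =>
    have := key 0
    simpa using this
  | succ N ih =>
    rw [Finset.prod_range_succ]
    have h := key (N + 1)
    refine (mul_le_mul_of_nonneg_right ih (hp (N + 1))).trans ?_
    push_cast at h ⊢
    linarith

theorem AA_summable {u v : ℝ} (hu0 : 0 ≤ u) (hv0 : 0 ≤ v) (hu : u < 1 / 8) (hv : v < 1 / 8) :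
    Summable (AA u v) := by
  have hpos : ∀ N, 0 < PP (fun j => v / (((2 * j + 1 : ℕ) : ℝ) - u)) N := fun N =>
    PP_pos (fun j => y_lt (by rwa [abs_of_nonneg hu0]) (by rwa [abs_of_nonneg hv0]) j) N
  have hs : Summable (fun N : ℕ => 2 * (1 / ((N : ℝ) + 1) ^ (3 / 2 : ℝ))) := by
    have h := (Real.summable_one_div_nat_rpow (p := 3 / 2)).2 (by norm_num)
    have h' := ((summable_nat_add_iff 1).2 h).mul_left 2
    simpa using h'
  refine Summable.of_nonneg_of_le (fun N => ?_) (fun N => ?_) hs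
  · unfold AA
    have := mm_pos N
    refine mul_nonneg (inv_nonneg.2 (mul_nonneg (by linarith) (by linarith))) (hpos N).le
  · unfold AA
    have hN : (0 : ℝ) ≤ N := Nat.cast_nonneg N
    have hb := PP_bound hu0 hv0 hu hv N
    have hq := hpos N
    set P := PP (fun j => v / (((2 * j + 1 : ℕ) : ℝ) - u)) N
    push_cast
    set s := Real.sqrt ((N : ℝ) + 1) with hsdef
    have hs1 : 0 < s := Real.sqrt_pos.2 (by linarith)
    have hs2 : s ^ 2 = N + 1 := Real.sq_sqrt (by linarith)
    have hr : ((N : ℝ) + 1) ^ (3 / 2 : ℝ) = (N + 1) * s := by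
      rw [show (3 / 2 : ℝ) = 1 + 1 / 2 by norm_num, Real.rpow_add (by linarith), Real.rpow_one,
        ← Real.sqrt_eq_rpow]
    rw [hr]
    have hP : P ≤ 3 / 2 * s := by
      refine abs_le_of_sq_le_sq' ?_ (by positivity) |>.2
      nlinarith
    have h1 : (N : ℝ) + 1 ≤ 2 * N + 1 := by linarith
    have h2 : 3 / 4 * ((N : ℝ) + 1) ≤ 2 * N + 1 - u := by linarith
    have h3 : (N + 1) * (3 / 4 * ((N : ℝ) + 1)) ≤ (2 * N + 1) * (2 * N + 1 - u) :=
      mul_le_mul h1 h2 (by positivity) (by positivity)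
    calc ((2 * (N : ℝ) + 1) * (2 * N + 1 - u))⁻¹ * P
        ≤ ((N + 1) * (3 / 4 * ((N : ℝ) + 1)))⁻¹ * (3 / 2 * s) := by
          refine mul_le_mul ?_ hP hq.le (by positivity)
          exact inv_anti₀ (by positivity) h3
      _ = 2 * (1 / ((N + 1) * s)) := by
          rw [← hs2]
          field_simp
          norm_num

theorem FF_total {u v : ℝ} (hu : |u| < 1 / 8) (hv : |v| < 1 / 8) :
    HasSum (fun p : List ℕ × ℕ => FF u v p.1 p.2) (∑' N, AA u v N) := by
  have h0 : ∀ K N, 0 ≤ FF |u| |v| K N := fun K N => (abs_nonneg _).trans (FF_abs u v K N)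
  have hu' : |(|u|)| < 1 / 8 := by rwa [abs_abs]
  have hv' : |(|v|)| < 1 / 8 := by rwa [abs_abs]
  have hA : Summable (fun p : ℕ × List ℕ => FF |u| |v| p.2 p.1) := by
    rw [summable_prod_of_nonneg (fun p => h0 _ _)]
    refine ⟨fun N => (FF_hasSum hu' hv' N).summable, ?_⟩
    have : (fun N : ℕ => ∑' K, FF |u| |v| K N) = AA |u| |v| := by
      funext N
      exact (FF_hasSum hu' hv' N).tsum_eq
    simp only [this]
    exact AA_summable (abs_nonneg _) (abs_nonneg _) hu hv
  have hB : Summable (fun p : ℕ × List ℕ => FF u v p.2 p.1) :=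
    Summable.of_norm_bounded hA (fun p => FF_abs u v _ _)
  have hC := hB.hasSum.prod_fiberwise (g := AA u v) (fun N => FF_hasSum hu hv N)
  rw [hC.tsum_eq]
  exact (Equiv.prodComm (List ℕ) ℕ).hasSum_iff.2 hB.hasSum

theorem len_le_sum : ∀ K : List ℕ, (∀ i ∈ K, 1 ≤ i) → K.length ≤ K.sum
  | [], _ => by simp
  | k :: K, h => by
    have := len_le_sum K (fun i hi => h i (List.mem_cons_of_mem _ hi))
    have := h k List.mem_cons_self
    simp
    omega

theorem rr_xw_pos (u v : ℝ) : ∀ (K : List ℕ) (_ : ∀ i ∈ K, 1 ≤ i) (N : ℕ),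
    rr (xw u v) K N = u ^ (K.sum - K.length) * v ^ K.length * rr x0 K N
  | [], _, N => by simp [rr]
  | k :: K, h, N => by
    have hK : ∀ i ∈ K, 1 ≤ i := fun i hi => h i (List.mem_cons_of_mem _ hi)
    have h1 := len_le_sum K hK
    have h2 := h k List.mem_cons_self
    rw [rr, rr, Finset.mul_sum]
    refine Finset.sum_congr rfl fun j _ => ?_
    rw [rr_xw_pos u v K hK j, xw, if_pos h2, List.sum_cons, List.length_cons,
      show k + K.sum - (K.length + 1) = (k - 1) + (K.sum - K.length) by omega, pow_add, pow_succ]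
    ring

theorem rr_xw_zero (u v : ℝ) : ∀ (K : List ℕ) (_ : ¬ ∀ i ∈ K, 1 ≤ i) (N : ℕ),
    rr (xw u v) K N = 0
  | [], h, N => absurd (by simp) h
  | k :: K, h, N => by
    rw [rr]
    refine Finset.sum_eq_zero fun j _ => ?_
    by_cases hk : 1 ≤ k
    · rw [rr_xw_zero u v K (fun h' => h (by
        intro i hi
        rcases List.mem_cons.1 hi with rfl | hi
        · exact hk
        · exact h' i hi)) j, mul_zero]
    · rw [xw, if_neg hk, zero_mul]

theorem FF_tsum (u v : ℝ) (K : List ℕ) :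
    ∑' N, FF u v K N = if Admissible K then
      u ^ (K.sum - K.length - 1) * v ^ (K.length - 1) * multTStar K else 0 := by
  cases K with
  | nil => simp [FF, Admissible]
  | cons k K =>
    by_cases hA : Admissible (k :: K)
    · rw [if_pos hA, multTStar_cons, ← tsum_mul_left]
      refine tsum_congr fun N => ?_
      have hK : ∀ i ∈ K, 1 ≤ i := fun i hi => hA.1 i (List.mem_cons_of_mem _ hi)
      have h1 := len_le_sum K hK
      have h2 : 2 ≤ k := hA.2
      rw [FF, hd, if_pos h2, rr_xw_pos u v K hK, List.sum_cons, List.length_cons,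
        show k + K.sum - (K.length + 1) - 1 = (k - 2) + (K.sum - K.length) by omega, pow_add,
        Nat.add_sub_cancel]
      ring
    · rw [if_neg hA]
      have : ∀ N, FF u v (k :: K) N = 0 := by
        intro N
        rw [FF]
        by_cases hk : 2 ≤ k
        · rw [rr_xw_zero, mul_zero]
          intro h
          refine hA ⟨?_, hk⟩
          intro i hi
          rcases List.mem_cons.1 hi with rfl | hi
          · omega
          · exact h i hi
        · rw [hd, if_neg hk, zero_mul]
      simp [this]

theorem G_total {u v : ℝ} (hu : |u| < 1 / 8) (hv : |v| < 1 / 8) :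
    HasSum (fun p : ℕ × ℕ => G0dStar (p.1 + p.2 + 2) (p.2 + 1) * u ^ p.1 * v ^ p.2)
      (∑' N, AA u v N) := by
  have h := FF_total hu hv
  have h1 := h.prod_fiberwise (g := fun K => ∑' N, FF u v K N)
    (fun K => (h.summable.prod_factor K).hasSum)
  simp only [FF_tsum] at h1
  have h2 := h1.tsum_fiberwise (fun K : List ℕ => (K.sum - K.length - 1, K.length - 1))
  refine h2.congr_fun ?_
  rintro ⟨p, q⟩
  refine Eq.trans ?_ (tsum_subtype _ (fun K : List ℕ => if Admissible K then
    u ^ (K.sum - K.length - 1) * v ^ (K.length - 1) * multTStar K else 0)).symm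
  rw [G0dStar, ← tsum_mul_right, ← tsum_mul_right]
  refine tsum_congr fun K => ?_
  by_cases hA : Admissible K
  · have hl := len_le_sum K hA.1
    have hs : 1 ≤ K.length ∧ K.length + 1 ≤ K.sum := by
      cases K with
      | nil => exact absurd hA.2 (by simp)
      | cons k K =>
        have := len_le_sum K (fun i hi => hA.1 i (List.mem_cons_of_mem _ hi))
        have h2 : 2 ≤ k := hA.2
        simp
        omega
    by_cases hc : K.sum = p + q + 2 ∧ K.length = q + 1
    · rw [if_pos ⟨hA, hc⟩, Set.indicator_of_mem, if_pos hA, hc.1, hc.2,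
        show p + q + 2 - (q + 1) - 1 = p by omega, Nat.add_sub_cancel]
      · ring
      · simp only [Set.mem_preimage, Set.mem_singleton_iff, Prod.mk.injEq]
        omega
    · rw [if_neg (fun h => hc h.2), Set.indicator_of_notMem]
      · simp
      · simp only [Set.mem_preimage, Set.mem_singleton_iff, Prod.mk.injEq]
        omega
  · rw [if_neg (fun h => hA h.1)]
    simp [Set.indicator, hA]

theorem poch_real (a : ℝ) (n : ℕ) :
    poch (a : ℂ) n = ((∏ i ∈ Finset.range n, (a + i) : ℝ) : ℂ) := by
  simp [poch]

theorem AA_term {u v : ℝ} (hu : |u| < 1 / 8) (hv : |v| < 1 / 8) (N : ℕ) :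
    AA u v N = (1 - u - v)⁻¹ * ((∏ i ∈ Finset.range N, ((1 - u) / 2 + i)) *
      (∏ i ∈ Finset.range N, ((1 : ℝ) / 2 + i)) * (∏ i ∈ Finset.range N, ((1 : ℝ) + i)) /
      ((N.factorial : ℝ) * (∏ i ∈ Finset.range N, ((3 - u - v) / 2 + i)) *
        ∏ i ∈ Finset.range N, ((3 : ℝ) / 2 + i))) := by
  have hu' := abs_lt.1 hu
  have hv' := abs_lt.1 hv
  unfold AA PP
  induction N with
  | zero =>
    have h1 : 1 - u ≠ 0 := by linarith
    have h2 : 1 - u - v ≠ 0 := by linarith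
    have e : 1 - v / (1 - u) = (1 - u - v) / (1 - u) := by field_simp
    simp [e]
    field_simp
  | succ N ih =>
    have hN : (0 : ℝ) ≤ N := Nat.cast_nonneg N
    rw [Finset.prod_range_succ]
    generalize ∏ j ∈ Finset.range (N + 1), (1 - v / (((2 * j + 1 : ℕ) : ℝ) - u))⁻¹ = Q at ih ⊢
    simp only [Finset.prod_range_succ _ N]
    push_cast [Nat.factorial_succ] at ih ⊢
    have h0 : (0 : ℝ) < 2 * N + 1 - u := by linarith
    have h1 : (0 : ℝ) < 2 * N + 1 := by linarith
    have h2 : (0 : ℝ) < 2 * (N + 1) + 1 - u := by linarith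
    have h3 : (0 : ℝ) < 2 * (N + 1) + 1 - u - v := by linarith
    have e : (1 - v / (2 * ((N : ℝ) + 1) + 1 - u))⁻¹ =
        (2 * ((N : ℝ) + 1) + 1 - u) / (2 * ((N : ℝ) + 1) + 1 - u - v) := by
      rw [← inv_div]
      congr 1
      field_simp
    rw [e]
    set c1 := ∏ i ∈ Finset.range N, ((1 - u) / 2 + (i : ℝ))
    set c2 := ∏ i ∈ Finset.range N, ((1 : ℝ) / 2 + i)
    set c3 := ∏ i ∈ Finset.range N, ((1 : ℝ) + i)
    set d1 := ∏ i ∈ Finset.range N, ((3 - u - v) / 2 + (i : ℝ))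
    set d2 := ∏ i ∈ Finset.range N, ((3 : ℝ) / 2 + i)
    have hQ : Q = ((2 * (N : ℝ) + 1) * (2 * N + 1 - u)) *
      ((1 - u - v)⁻¹ * (c1 * c2 * c3 / (N.factorial * d1 * d2))) := by
      rw [← ih]
      field_simp
    rw [hQ]
    have e1 : (1 - u) / 2 + (N : ℝ) = (2 * N + 1 - u) / 2 := by ring
    have e2 : (1 : ℝ) / 2 + N = (2 * N + 1) / 2 := by ring
    have e3 : (3 - u - v) / 2 + (N : ℝ) = (2 * (N + 1) + 1 - u - v) / 2 := by ring
    have e4 : (3 : ℝ) / 2 + N = (2 * (N + 1) + 1) / 2 := by ring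
    rw [e1, e2, e3, e4]
    have d1p : 0 < d1 := Finset.prod_pos fun i _ => by
      have : (0 : ℝ) ≤ i := Nat.cast_nonneg i
      linarith
    have d2p : 0 < d2 := Finset.prod_pos fun i _ => by positivity
    have fp : (0 : ℝ) < N.factorial := by exact_mod_cast Nat.factorial_pos N
    have h4 : (0 : ℝ) < 1 - u - v := by linarith
    have h5 : (0 : ℝ) < 2 * (N + 1) + 1 := by linarith
    field_simp
    ring

/-- Generating function of the sums `G₀*(k,n)` of multiple `t`-star values of fixed weight
and depth: `∑_{k>n≥1} G₀*(k,n) u^{k-n-1} v^{n-1}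
 = (1/(1-u-v)) ⬝ ₃F₂((1-u)/2, 1/2, 1; (3-u-v)/2, 3/2; 1)`. -/
theorem weight_depth_generating_function_multiple_t_star :
    ∃ δ > (0 : ℝ), ∀ u v : ℝ, |u| < δ → |v| < δ →
      Summable (fun p : ℕ × ℕ =>
        G0dStar (p.1 + p.2 + 2) (p.2 + 1) * u ^ p.1 * v ^ p.2) ∧
      ((∑' p : ℕ × ℕ, G0dStar (p.1 + p.2 + 2) (p.2 + 1) * u ^ p.1 * v ^ p.2 : ℝ) : ℂ)
        = (1 - (u : ℂ) - (v : ℂ))⁻¹ *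
            hyp3F2 ((1 - (u : ℂ)) / 2) (1 / 2) 1
              ((3 - (u : ℂ) - (v : ℂ)) / 2) (3 / 2) 1 := by
  refine ⟨1 / 8, by norm_num, fun u v hu hv => ?_⟩
  have h := G_total hu hv
  refine ⟨h.summable, ?_⟩
  rw [h.tsum_eq, hyp3F2, Complex.ofReal_tsum, ← tsum_mul_left]
  refine tsum_congr fun N => ?_
  rw [AA_term hu hv N]
  have e1 : (1 - (u : ℂ)) / 2 = (((1 - u) / 2 : ℝ) : ℂ) := by push_cast; ring
  have e2 : (1 : ℂ) / 2 = ((1 / 2 : ℝ) : ℂ) := by push_cast; ring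
  have e3 : (1 : ℂ) = ((1 : ℝ) : ℂ) := by push_cast; ring
  have e4 : (3 - (u : ℂ) - (v : ℂ)) / 2 = (((3 - u - v) / 2 : ℝ) : ℂ) := by push_cast; ring
  have e5 : (3 : ℂ) / 2 = ((3 / 2 : ℝ) : ℂ) := by push_cast; ring
  have p3 : poch 1 N = ((∏ i ∈ Finset.range N, ((1 : ℝ) + i) : ℝ) : ℂ) := by
    rw [← poch_real, ← e3]
  rw [e1, e2, e4, e5, p3, poch_real, poch_real, poch_real, poch_real]
  simp only [one_pow, mul_one]
  push_cast
  ring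
end
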